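/- arXiv:2512.11702 — 2 statements merged into one kernel-verified Lean document; each statement's English description precedes it below -/
import Mathlib

section
/- An element f·y₁y₂y₃ of R with f ∈ S is fixed by G if and only if f ∈ S^G, and the G-invariant 3-forms {f·y₁y₂y₃ : f ∈ S} ∩ R^G form a free A-module with basis {y₁y₂y₃, b·y₁y₂y₃}. -/
open Matrix MvPolynomial

set_option synthInstance.maxHeartbeats 1000000
set_option maxHeartbeats 1000000

abbrev F3 : Type := ZMod 3
abbrev G3 : Type := Matrix.SpecialLinearGroup (Fin 2) F3
abbrev S3 : Type := MvPolynomial (Fin 3) F3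

/-- The fixed basis `v₁, v₂, v₃` of the traceless `2 × 2` matrices over `𝔽₃`. -/
def V : Fin 3 → Matrix (Fin 2) (Fin 2) F3 :=
  ![!![0, 1; -1, 0], !![-1, -1; -1, 1], !![1, -1; -1, -1]]

/-- Coordinates of a traceless matrix with respect to the basis `v₁, v₂, v₃`. -/
def coordM : Fin 3 → Matrix (Fin 2) (Fin 2) F3 → F3 :=
  ![fun X => X 1 0 - X 0 1, fun X => X 0 0 - X 0 1 - X 1 0, fun X => -(X 0 0 + X 0 1 + X 1 0)]

/-- Matrix of the (dual) action of `g` on `M*`: `g • x_s = ∑ r, (rep g) s r • x_r`, where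
`(rep g) s r = x_s (g⁻¹ • v_r) = coordM s (g⁻¹ vᵣ g)`, coming from `(g • f)(v) = f(g⁻¹ • v)`. -/
def rep (g : G3) : Matrix (Fin 3) (Fin 3) F3 :=
  Matrix.of fun s r => coordM s ((g⁻¹ : G3) * V r * (g : Matrix (Fin 2) (Fin 2) F3))

/-- The action of `g ∈ SL₂(𝔽₃)` on `S = 𝔽₃[x₁,x₂,x₃]` by algebra automorphisms, given by
substituting `x_s ↦ g • x_s = ∑ r, (rep g) s r • x_r`. -/
noncomputable def actS (g : G3) : S3 →ₐ[F3] S3 :=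
  MvPolynomial.aeval fun s => ∑ r : Fin 3, rep g s r • MvPolynomial.X r

noncomputable def a1 : S3 := X 0 ^ 2 + X 1 ^ 2 + X 2 ^ 2
noncomputable def a2 : S3 := X 0 * X 1 * X 2
noncomputable def a3 : S3 := X 0 ^ 4 + X 1 ^ 4 + X 2 ^ 4
noncomputable def bP : S3 := X 0 ^ 4 * X 1 ^ 2 + X 0 ^ 2 * X 2 ^ 4 + X 1 ^ 4 * X 2 ^ 2
noncomputable def av : Fin 3 → S3 := ![a1, a2, a3]

def tm : G3 := ⟨!![1, 1; 0, 1], by decide⟩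
def im : G3 := ⟨!![0, 1; -1, 0], by decide⟩
def jm : G3 := ⟨!![1, -1; -1, -1], by decide⟩

/-- The quaternion subgroup `H = ⟨i, j⟩ ≅ Q₈` of `SL₂(𝔽₃)`. -/
def H3 : Subgroup G3 := Subgroup.closure {im, jm}

/-- The character with `χ(±e) = χ(±i) = 1` and `χ(±j) = χ(±k) = -1` (its values off the
set `{±e, ±i}` are `-1`; only the restriction to `H` is ever used). -/
def chi (g : G3) : F3 :=
  if (g : Matrix (Fin 2) (Fin 2) F3) = 1 ∨ (g : Matrix (Fin 2) (Fin 2) F3) = -1 ∨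
     (g : Matrix (Fin 2) (Fin 2) F3) = (im : Matrix (Fin 2) (Fin 2) F3) ∨
     (g : Matrix (Fin 2) (Fin 2) F3) = -(im : Matrix (Fin 2) (Fin 2) F3) then 1 else -1

/-- The `𝔽₃`-submodule `S^H_χ` of `χ`-relative `H`-invariants in `S`. -/
noncomputable def relInv : Submodule F3 S3 where
  carrier := {f | ∀ h ∈ H3, actS h f = chi h • f}
  add_mem' := by
    intro f g hf hg h hh
    rw [map_add, hf h hh, hg h hh, smul_add]
  zero_mem' := by
    intro h hh
    rw [map_zero, smul_zero]
  smul_mem' := by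
    intro c f hf h hh
    rw [_root_.map_smul, hf h hh, smul_comm]

open TensorProduct

/-- The exterior algebra `Λ(M*)` on `y₁, y₂, y₃` (with `M*` in dual-basis coordinates). -/
abbrev Lam : Type := ExteriorAlgebra F3 (Fin 3 → F3)

/-- `y_s = dx_s`, the exterior generators. -/
noncomputable def yy (s : Fin 3) : Lam := ExteriorAlgebra.ι F3 (Pi.single s 1)

/-- The linear action of `g` on the coordinate space of `y₁, y₂, y₃`:
`y_s ↦ ∑ r, (rep g) s r • y_r`. -/
noncomputable def repL (g : G3) : (Fin 3 → F3) →ₗ[F3] (Fin 3 → F3) :=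
  Matrix.toLin' (rep g)ᵀ

/-- The algebra of differential forms `R = S ⊗ Λ(M*)`: the graded-commutative `𝔽₃`-algebra
generated by the central `x₁, x₂, x₃` and the anticommuting `y₁, y₂, y₃`. -/
abbrev Rf : Type := S3 ⊗[F3] Lam

/-- The action of `g ∈ SL₂(𝔽₃)` on `R` by ring automorphisms, acting on `x`'s as on `S`
and on `y₁, y₂, y₃` by the same matrices as on `x₁, x₂, x₃`. -/
noncomputable def actR (g : G3) : Rf →ₐ[F3] Rf :=
  Algebra.TensorProduct.map (actS g) (ExteriorAlgebra.map (repL g))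

noncomputable def c1 : Rf := X 0 ⊗ₜ[F3] yy 0 + X 1 ⊗ₜ[F3] yy 1 + X 2 ⊗ₜ[F3] yy 2
noncomputable def c2 : Rf :=
  (X 1 * X 2) ⊗ₜ[F3] yy 0 + (X 2 * X 0) ⊗ₜ[F3] yy 1 + (X 0 * X 1) ⊗ₜ[F3] yy 2
noncomputable def c3 : Rf :=
  (X 0 ^ 3) ⊗ₜ[F3] yy 0 + (X 1 ^ 3) ⊗ₜ[F3] yy 1 + (X 2 ^ 3) ⊗ₜ[F3] yy 2
noncomputable def c4 : Rf :=
  (X 0 * X 1 ^ 2) ⊗ₜ[F3] yy 0 + (X 1 * X 2 ^ 2) ⊗ₜ[F3] yy 1 + (X 2 * X 0 ^ 2) ⊗ₜ[F3] yy 2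
noncomputable def c5 : Rf :=
  (X 1 ^ 3 * X 2) ⊗ₜ[F3] yy 0 + (X 2 ^ 3 * X 0) ⊗ₜ[F3] yy 1 + (X 0 ^ 3 * X 1) ⊗ₜ[F3] yy 2
noncomputable def c6 : Rf :=
  (X 0 ^ 3 * X 1 ^ 2) ⊗ₜ[F3] yy 0 + (X 1 ^ 3 * X 2 ^ 2) ⊗ₜ[F3] yy 1 +
    (X 2 ^ 3 * X 0 ^ 2) ⊗ₜ[F3] yy 2

noncomputable def d1 : Rf :=
  X 0 ⊗ₜ[F3] (yy 1 * yy 2) + X 1 ⊗ₜ[F3] (yy 2 * yy 0) + X 2 ⊗ₜ[F3] (yy 0 * yy 1)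
noncomputable def d2 : Rf :=
  (X 1 * X 2) ⊗ₜ[F3] (yy 1 * yy 2) + (X 2 * X 0) ⊗ₜ[F3] (yy 2 * yy 0) +
    (X 0 * X 1) ⊗ₜ[F3] (yy 0 * yy 1)
noncomputable def d3 : Rf :=
  (X 0 ^ 3) ⊗ₜ[F3] (yy 1 * yy 2) + (X 1 ^ 3) ⊗ₜ[F3] (yy 2 * yy 0) +
    (X 2 ^ 3) ⊗ₜ[F3] (yy 0 * yy 1)
noncomputable def d4 : Rf :=
  (X 0 * X 1 ^ 2) ⊗ₜ[F3] (yy 1 * yy 2) + (X 1 * X 2 ^ 2) ⊗ₜ[F3] (yy 2 * yy 0) +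
    (X 2 * X 0 ^ 2) ⊗ₜ[F3] (yy 0 * yy 1)
noncomputable def d5 : Rf :=
  (X 1 ^ 3 * X 2) ⊗ₜ[F3] (yy 1 * yy 2) + (X 2 ^ 3 * X 0) ⊗ₜ[F3] (yy 2 * yy 0) +
    (X 0 ^ 3 * X 1) ⊗ₜ[F3] (yy 0 * yy 1)
noncomputable def d6 : Rf :=
  (X 0 ^ 3 * X 1 ^ 2) ⊗ₜ[F3] (yy 1 * yy 2) + (X 1 ^ 3 * X 2 ^ 2) ⊗ₜ[F3] (yy 2 * yy 0) +
    (X 2 ^ 3 * X 0 ^ 2) ⊗ₜ[F3] (yy 0 * yy 1)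

/-- The top form `y₁y₂y₃`. -/
noncomputable def y123 : Lam := yy 0 * yy 1 * yy 2

/-- `Φ(p, q) = (p(a₁,a₂,a₃) + q(a₁,a₂,a₃)·b) · y₁y₂y₃`. -/
noncomputable def Phi13 (pq : MvPolynomial (Fin 3) F3 × MvPolynomial (Fin 3) F3) : Rf :=
  (aeval av pq.1 + aeval av pq.2 * bP) ⊗ₜ[F3] y123

/-!
The form `y₁y₂y₃` spans the determinant character of `G`, which is trivial, so `f·y₁y₂y₃` is fixed
exactly when `f` is. The image of `G` in `GL(M*)` consists of the signed permutations of
`x₁, x₂, x₃` with an even number of signs and an even permutation. Invariance under even sign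
changes means `f = g(x²) + h(x²)·x₁x₂x₃`, where `x²` stands for `x₁², x₂², x₃²`; then `g` and `h`
are invariant under `A₃`, hence of the form `p + q·Δ` with `p`, `q` symmetric and `Δ` the
Vandermonde polynomial. In characteristic `3` one has `Δ(x²) = b + a₁(a₃ - a₁²)`, and the
elementary symmetric polynomials of the `xᵢ²` are `a₁`, `a₃ - a₁²` and `a₂²`, so `S^G = A + A·b`.
All of `S` is integral over `A`, which makes `a₁, a₂, a₃` algebraically independent, and a
transposition fixes `A` but not `b`, so the sum is direct.
-/

theorem eq_zero_of_add_mul_eq_zero_of_map_ne {A : Type*} [CommRing A] [IsDomain A] (φ : A →+* A)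
    {p q d : A} (hp : φ p = p) (hq : φ q = q) (hd : φ d ≠ d) (h : p + q * d = 0) :
    p = 0 ∧ q = 0 := by
  have h' : p + q * φ d = 0 := by simpa [hp, hq] using congrArg φ h
  have hq0 : q = 0 :=
    (mul_eq_zero.1 (by linear_combination h' - h : q * (φ d - d) = 0)).resolve_right
      (sub_ne_zero.2 hd)
  exact ⟨by simpa [hq0] using h, hq0⟩

theorem tmul_left_injective_of_apply_eq_one {R M N : Type*} [CommSemiring R] [AddCommMonoid M]
    [AddCommMonoid N] [Module R M] [Module R N] {n : N} (φ : N →ₗ[R] R) (hφ : φ n = 1) :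
    Function.Injective fun m : M => m ⊗ₜ[R] n := by
  refine Function.LeftInverse.injective (g := TensorProduct.rid R M ∘ φ.lTensor M) fun m => ?_
  simp [hφ]

section ExteriorAlgebra

variable {R M : Type*} [CommRing R] [AddCommGroup M] [Module R M]

theorem alternatingMap_comp_basis_eq_det_smul {N ι : Type*} [AddCommGroup N] [Module R N]
    [Finite ι] (e : Module.Basis ι R M) (f : M →ₗ[R] M) (g : M [⋀^ι]→ₗ[R] N) :
    g (f ∘ e) = LinearMap.det f • g e := by
  classical
  have := Fintype.ofFinite ι
  have hg : g = e.det.smulRight (g e) := by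
    refine e.ext_alternating fun i hi => ?_
    let τ : Equiv.Perm ι := .ofBijective i (Finite.injective_iff_bijective.1 hi)
    change g (e ∘ τ) = e.det.smulRight (g e) (e ∘ τ)
    simp [AlternatingMap.map_perm, e.det_self]
  simpa [e.det_comp, e.det_self] using DFunLike.congr_fun hg (f ∘ e)

theorem exists_dual_ιMulti_basis_eq_one {n : ℕ} (e : Module.Basis (Fin n) R M) :
    ∃ φ : ExteriorAlgebra R M →ₗ[R] R, φ (ExteriorAlgebra.ιMulti R n e) = 1 := by
  refine ⟨ExteriorAlgebra.liftAlternating (Pi.single n e.det), ?_⟩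
  rw [ExteriorAlgebra.liftAlternating_apply_ιMulti, Pi.single_eq_same, e.det_self]

end ExteriorAlgebra

section XSubX

variable {R σ : Type*} [CommRing R]

instance neZero_two_mvPolynomial [NeZero (2 : R)] : NeZero (2 : MvPolynomial σ R) := by
  rw [← map_ofNat C 2]
  exact NeZero.of_injective (C_injective σ R)

variable {i j : σ}

theorem X_sub_X_dvd_sub_bind₁_update [DecidableEq σ] (i j : σ) (f : MvPolynomial σ R) :
    (X i - X j) ∣ f - bind₁ (Function.update X i (X j)) f := by
  set I : Ideal (MvPolynomial σ R) := Ideal.span {X i - X j}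
  have h : Ideal.Quotient.mkₐ R I =
      (Ideal.Quotient.mkₐ R I).comp (bind₁ (Function.update X i (X j))) := by
    ext s
    rcases eq_or_ne s i with rfl | hs
    · simpa using (Ideal.Quotient.mk_eq_mk_iff_sub_mem _ _).2 (Ideal.mem_span_singleton_self _)
    · simp [hs]
  rw [← Ideal.mem_span_singleton, ← Ideal.Quotient.mk_eq_mk_iff_sub_mem]
  exact DFunLike.congr_fun h f

theorem X_sub_X_dvd_iff [DecidableEq σ] (hij : i ≠ j) {f : MvPolynomial σ R} :
    (X i - X j) ∣ f ↔ bind₁ (Function.update X i (X j)) f = 0 := by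
  refine ⟨?_, fun h => by simpa [h] using X_sub_X_dvd_sub_bind₁_update i j f⟩
  rintro ⟨g, rfl⟩
  simp [hij.symm]

theorem prime_X_sub_X [IsDomain R] (hij : i ≠ j) : Prime (X i - X j : MvPolynomial σ R) := by
  classical
  refine ⟨sub_ne_zero.2 (X_injective.ne hij), fun h => ?_, fun f g h => ?_⟩
  · simpa [X_sub_X_dvd_iff hij] using h.dvd (a := 1)
  · simpa only [X_sub_X_dvd_iff hij, map_mul, mul_eq_zero] using h

theorem isRelPrime_X_sub_X [IsDomain R] {k l : σ} (hij : i ≠ j) (hkl : k ≠ l)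
    (h : s(i, j) ≠ s(k, l)) : IsRelPrime (X i - X j : MvPolynomial σ R) (X k - X l) := by
  classical
  rw [(prime_X_sub_X hij).irreducible.isRelPrime_iff_not_dvd, X_sub_X_dvd_iff hij]
  have hu (s : σ) : Function.update (X : σ → MvPolynomial σ R) i (X j) s =
      X (if s = i then j else s) := by
    split_ifs with hs <;> simp [hs]
  rw [map_sub, bind₁_X_right, bind₁_X_right, hu, hu, sub_eq_zero, X_injective.eq_iff]
  rw [Ne, Sym2.eq_iff] at h
  grind

theorem X_sub_X_dvd_of_rename_swap_eq_neg [DecidableEq σ] [IsDomain R] [NeZero (2 : R)]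
    (hij : i ≠ j) {f : MvPolynomial σ R} (h : rename (Equiv.swap i j) f = -f) :
    (X i - X j) ∣ f := by
  have hcomp : (Function.update X i (X j) : σ → MvPolynomial σ R) ∘ Equiv.swap i j =
      Function.update X i (X j) := by
    funext s
    rcases eq_or_ne s i with rfl | hi
    · simp [hij.symm]
    rcases eq_or_ne s j with rfl | hj
    · simp [hij.symm]
    · simp [hi, Equiv.swap_apply_of_ne_of_ne hi hj]
  have h2 := congrArg (bind₁ (Function.update X i (X j))) h
  rw [bind₁_rename, hcomp, map_neg, eq_neg_iff_add_eq_zero, ← two_mul] at h2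
  exact (X_sub_X_dvd_iff hij).2 ((mul_eq_zero.1 h2).resolve_left two_ne_zero)

end XSubX

section Alternating

/-- Alternating (antisymmetric) polynomials: those which every permutation `e` of the variables
multiplies by the sign of `e`. -/
def IsAlternating {σ R : Type*} [Fintype σ] [DecidableEq σ] [CommRing R] (f : MvPolynomial σ R) :
    Prop :=
  ∀ e : Equiv.Perm σ, rename e f = Equiv.Perm.sign e • f

/-- The Vandermonde polynomial `∏_{i < j} (xⱼ - xᵢ)`, whose multiples by symmetric polynomials are
the alternating polynomials away from characteristic `2`. -/
noncomputable def vandermondePoly (n : ℕ) (R : Type*) [CommRing R] : MvPolynomial (Fin n) R :=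
  (vandermonde X).det

variable {n : ℕ} {R : Type*} [CommRing R]

theorem isAlternating_vandermondePoly : IsAlternating (vandermondePoly n R) := by
  intro e
  have hsub : (rename e).mapMatrix (vandermonde X) =
      (vandermonde (X : Fin n → MvPolynomial (Fin n) R)).submatrix e id := by
    ext1 i j
    simp [vandermonde_apply]
  rw [vandermondePoly, AlgHom.map_det, hsub, det_permute, Units.smul_def, zsmul_eq_mul]

theorem vandermondePoly_ne_zero [IsDomain R] : vandermondePoly n R ≠ 0 :=
  det_vandermonde_ne_zero_iff.2 X_injective

theorem vandermondePoly_three :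
    vandermondePoly 3 R = (X 1 - X 0) * (X 2 - X 0) * (X 2 - X 1) := by
  have h0 : Finset.Ioi (0 : Fin 3) = {1, 2} := by decide
  have h1 : Finset.Ioi (1 : Fin 3) = {2} := by decide
  have h2 : Finset.Ioi (2 : Fin 3) = ∅ := by decide
  simp [vandermondePoly, det_vandermonde, Fin.prod_univ_three, h0, h1, h2]

theorem IsAlternating.vandermondePoly_dvd [IsDomain R] [UniqueFactorizationMonoid R]
    [NeZero (2 : R)] {f : MvPolynomial (Fin n) R} (hf : IsAlternating f) :
    vandermondePoly n R ∣ f := by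
  rw [vandermondePoly, det_vandermonde, Finset.prod_sigma']
  refine Finset.prod_dvd_of_isRelPrime ?_ ?_
  · rintro ⟨i, j⟩ hij ⟨k, l⟩ hkl hne
    have hij' : i < j := Finset.mem_Ioi.1 (Finset.mem_sigma.1 hij).2
    have hkl' : k < l := Finset.mem_Ioi.1 (Finset.mem_sigma.1 hkl).2
    refine isRelPrime_X_sub_X hij'.ne' hkl'.ne' fun h => hne ?_
    rw [Sym2.eq_iff] at h
    grind
  · rintro ⟨i, j⟩ hij
    have hij' : j ≠ i := (Finset.mem_Ioi.1 (Finset.mem_sigma.1 hij).2).ne'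
    exact X_sub_X_dvd_of_rename_swap_eq_neg hij' (by simp [hf _, Equiv.Perm.sign_swap hij'])

theorem IsAlternating.exists_isSymmetric_mul_vandermondePoly [IsDomain R]
    [UniqueFactorizationMonoid R] [NeZero (2 : R)] {f : MvPolynomial (Fin n) R}
    (hf : IsAlternating f) :
    ∃ q : MvPolynomial (Fin n) R, q.IsSymmetric ∧ f = q * vandermondePoly n R := by
  obtain ⟨q, rfl⟩ := hf.vandermondePoly_dvd
  refine ⟨q, fun e => mul_left_cancel₀ vandermondePoly_ne_zero ?_, mul_comm _ _⟩
  have h := hf e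
  rwa [map_mul, isAlternating_vandermondePoly, smul_mul_assoc, smul_left_cancel_iff] at h

theorem rename_eq_rename_of_sign_eq {σ : Type*} [Fintype σ] [DecidableEq σ]
    {f : MvPolynomial σ R} (hf : ∀ e ∈ alternatingGroup σ, rename e f = f)
    {e e' : Equiv.Perm σ} (h : Equiv.Perm.sign e = Equiv.Perm.sign e') :
    rename e f = rename e' f := by
  have he : e'⁻¹ * e ∈ alternatingGroup σ := by simp [Equiv.Perm.mem_alternatingGroup, h]
  calc rename e f = rename (e' * (e'⁻¹ * e)) f := by rw [mul_inv_cancel_left]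
    _ = rename e' (rename (e'⁻¹ * e) f) := by rw [rename_rename, Equiv.Perm.coe_mul]
    _ = rename e' f := by rw [hf _ he]

theorem exists_isSymmetric_add_mul_vandermondePoly {K : Type*} [Field K] [NeZero (2 : K)]
    {f : MvPolynomial (Fin n) K} (hf : ∀ e ∈ alternatingGroup (Fin n), rename e f = f) :
    ∃ p q : MvPolynomial (Fin n) K,
      p.IsSymmetric ∧ q.IsSymmetric ∧ f = p + q * vandermondePoly n K := by
  rcases subsingleton_or_nontrivial (Fin n) with _ | _
  · exact ⟨f, 0, fun e => hf e (by simp [Subsingleton.elim e 1]), .zero, by simp⟩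
  obtain ⟨i, j, hij⟩ := exists_pair_ne (Fin n)
  let τ : Equiv.Perm (Fin n) := Equiv.swap i j
  have hτ : Equiv.Perm.sign τ = -1 := Equiv.Perm.sign_swap hij
  have hcases (e : Equiv.Perm (Fin n)) :
      (Equiv.Perm.sign e = 1 ∧ rename e f = f ∧ rename e (rename τ f) = rename τ f) ∨
        (Equiv.Perm.sign e = -1 ∧ rename e f = rename τ f ∧ rename e (rename τ f) = f) := by
    rw [rename_rename, ← Equiv.Perm.coe_mul]
    rcases Int.units_eq_one_or (Equiv.Perm.sign e) with he | he
    · exact .inl ⟨he, hf e he, rename_eq_rename_of_sign_eq hf (by simp [he])⟩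
    · exact .inr ⟨he, rename_eq_rename_of_sign_eq hf (he.trans hτ.symm),
        hf _ (by simp [Equiv.Perm.mem_alternatingGroup, he, hτ])⟩
  have hsymm : (f + rename τ f).IsSymmetric := fun e => by
    obtain ⟨-, h, h'⟩ | ⟨-, h, h'⟩ := hcases e <;> simp only [map_add, h, h', add_comm]
  have halt : IsAlternating (f - rename τ f) := fun e => by
    obtain ⟨he, h, h'⟩ | ⟨he, h, h'⟩ := hcases e <;> simp [he, h, h']
  obtain ⟨q, hq, hfq⟩ := halt.exists_isSymmetric_mul_vandermondePoly
  refine ⟨C 2⁻¹ * (f + rename τ f), C 2⁻¹ * q, (IsSymmetric.C _).mul hsymm,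
    (IsSymmetric.C _).mul hq, ?_⟩
  have half : (C 2⁻¹ * 2 : MvPolynomial (Fin n) K) = 1 := by
    rw [← map_ofNat C 2, ← C_mul, inv_mul_cancel₀ two_ne_zero, C_1]
  linear_combination C 2⁻¹ * hfq - f * half

end Alternating

section Expand

/-- The signed permutation `xᵢ ↦ εᵢ x_{e(i)}` of the variables. -/
noncomputable def signedPerm {σ R : Type*} [CommRing R] (ε : σ → ℤˣ) (e : Equiv.Perm σ) :
    MvPolynomial σ R →ₐ[R] MvPolynomial σ R :=
  aeval fun i => ε i • X (e i)

/-- The matrix of `signedPerm ε e`. As in `rep`, row `i` holds the coefficients of the image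
of `xᵢ`. -/
def signedPermMatrix {σ R : Type*} [DecidableEq σ] [CommRing R] (ε : σ → ℤˣ)
    (e : Equiv.Perm σ) : Matrix σ σ R :=
  of fun i j => if e i = j then ((ε i : ℤ) : R) else 0

variable {σ R : Type*} [CommRing R] (ε : σ → ℤˣ) (e : Equiv.Perm σ)

theorem signedPerm_expand_two (f : MvPolynomial σ R) :
    signedPerm ε e (expand 2 f) = expand 2 (rename e f) := by
  have h : (signedPerm ε e).comp (expand 2) = (expand 2 (R := R)).comp (rename e) := by
    ext1 i
    simp [signedPerm, smul_pow, Int.units_sq]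
  exact DFunLike.congr_fun h f

theorem exists_monomial_eq_expand_two {m : σ →₀ ℕ} (hm : ∀ i, Even (m i)) (c : R) :
    ∃ g, monomial m c = expand 2 g := by
  refine ⟨monomial (m.mapRange (· / 2) (Nat.zero_div 2)) c, ?_⟩
  rw [expand_monomial]
  congr 2
  ext i
  simp [Nat.two_mul_div_two_of_even (hm i)]

variable [Fintype σ]

theorem aeval_sum_signedPermMatrix [DecidableEq σ] :
    aeval (fun i => ∑ j, (signedPermMatrix ε e : Matrix σ σ R) i j • (X j : MvPolynomial σ R)) =
      signedPerm ε e := by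
  ext1 i
  simp [signedPerm, signedPermMatrix, Units.smul_def, Int.cast_smul_eq_zsmul]

theorem det_signedPermMatrix [DecidableEq σ] :
    (signedPermMatrix ε e : Matrix σ σ R).det = ((∏ i, ε i) * Equiv.Perm.sign e : ℤˣ) := by
  have h : (signedPermMatrix ε e : Matrix σ σ R) =
      diagonal (fun i => ((ε i : ℤ) : R)) * e.permMatrix R := by
    ext i j
    simp [signedPermMatrix, Equiv.Perm.permMatrix, PEquiv.toMatrix_apply, eq_comm]
  rw [h, det_mul, det_diagonal, det_permutation]
  simp

theorem signedPerm_prod_X :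
    signedPerm ε e (∏ i, X i : MvPolynomial σ R) = (∏ i, ε i) • ∏ i, X i := by
  simp [signedPerm, Finset.prod_smul, Equiv.prod_comp e X]

theorem coeff_signedPerm_one (m : σ →₀ ℕ) (f : MvPolynomial σ R) :
    coeff m (signedPerm ε 1 f) = (∏ i, ε i ^ m i) • coeff m f := by
  classical
  induction f using MvPolynomial.induction_on' with
  | add p q hp hq => simp [hp, hq]
  | monomial n c =>
    have h : signedPerm ε 1 (monomial n c) = (∏ i, ε i ^ n i) • monomial n c := by
      rw [signedPerm, aeval_monomial, monomial_eq, Finsupp.prod_fintype _ _ (by simp),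
        Finsupp.prod_fintype _ _ (by simp)]
      simp [smul_pow, Finset.prod_smul, algebraMap_eq, mul_smul_comm]
    rw [h, coeff_smul, coeff_monomial]
    split_ifs with hn <;> simp [hn]

theorem expand_two_add_expand_two_mul_prod_X_eq_zero [IsDomain R] [NeZero (2 : R)] [Nonempty σ]
    {g h : MvPolynomial σ R} (H : expand 2 g + expand 2 h * ∏ i, X i = 0) : g = 0 ∧ h = 0 := by
  classical
  obtain ⟨i⟩ := ‹Nonempty σ›
  set θ : MvPolynomial σ R →ₐ[R] MvPolynomial σ R := signedPerm (Pi.mulSingle i (-1)) 1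
  have hexp (f : MvPolynomial σ R) : θ (expand 2 f) = expand 2 f := by
    simp [θ, signedPerm_expand_two]
  have hprod : θ (∏ i, X i) ≠ ∏ i, X i := by
    have h0 : (∏ i, X i : MvPolynomial σ R) ≠ 0 := Finset.prod_ne_zero_iff.2 fun i _ => X_ne_zero i
    rw [signedPerm_prod_X, Finset.prod_pi_mulSingle', if_pos (Finset.mem_univ i),
      Units.neg_smul, one_smul, Ne, neg_eq_iff_add_eq_zero, ← two_mul]
    exact mul_ne_zero two_ne_zero h0
  obtain ⟨hg, hh⟩ :=
    eq_zero_of_add_mul_eq_zero_of_map_ne θ.toRingHom (hexp g) (hexp h) hprod H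
  exact ⟨(expand_eq_zero two_pos).1 hg, (expand_eq_zero two_pos).1 hh⟩

theorem exists_monomial_eq_expand_two_mul_prod_X {m : σ →₀ ℕ} (hm : ∀ i, Odd (m i)) (c : R) :
    ∃ h, monomial m c = expand 2 h * ∏ i, X i := by
  choose k hk using hm
  refine ⟨C c * ∏ i, X i ^ k i, ?_⟩
  rw [monomial_eq, Finsupp.prod_fintype _ _ (by simp)]
  simp [hk, pow_add, pow_mul, Finset.prod_mul_distrib, mul_assoc]

theorem exists_eq_expand_two_add_expand_two_mul_prod_X {f : MvPolynomial σ R}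
    (hf : ∀ m ∈ f.support, (∀ i, Even (m i)) ∨ ∀ i, Odd (m i)) :
    ∃ g h, f = expand 2 g + expand 2 h * ∏ i, X i := by
  let N : Submodule R (MvPolynomial σ R) := LinearMap.range (expand 2 (R := R)).toLinearMap ⊔
    LinearMap.range (LinearMap.mulRight R (∏ i, X i) ∘ₗ (expand 2 (R := R)).toLinearMap)
  have hN : f ∈ N := by
    rw [f.as_sum]
    refine N.sum_mem fun m hm => ?_
    rcases hf m hm with h | h
    · obtain ⟨g, hg⟩ := exists_monomial_eq_expand_two h (coeff m f)
      exact Submodule.mem_sup_left ⟨g, hg.symm⟩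
    · obtain ⟨g, hg⟩ := exists_monomial_eq_expand_two_mul_prod_X h (coeff m f)
      exact Submodule.mem_sup_right ⟨g, hg.symm⟩
  obtain ⟨_, ⟨g, rfl⟩, _, ⟨h, rfl⟩, hgh⟩ := Submodule.mem_sup.1 hN
  exact ⟨g, h, hgh.symm⟩

theorem forall_even_or_forall_odd_of_signedPerm_eq [IsDomain R] [NeZero (2 : R)]
    {f : MvPolynomial σ R} (hf : ∀ ε : σ → ℤˣ, ∏ i, ε i = 1 → signedPerm ε 1 f = f)
    {m : σ →₀ ℕ} (hm : m ∈ f.support) : (∀ i, Even (m i)) ∨ ∀ i, Odd (m i) := by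
  classical
  by_contra! h
  obtain ⟨⟨i, hi⟩, j, hj⟩ := h
  rw [Nat.not_even_iff_odd] at hi
  rw [Nat.not_odd_iff_even] at hj
  -- Changing the signs of `xᵢ` and `xⱼ` negates the monomial `m`.
  let ε : σ → ℤˣ := Pi.mulSingle i (-1) * Pi.mulSingle j (-1)
  have hε : ∏ k, ε k = 1 := by simp [ε, Finset.prod_mul_distrib]
  have hεm : ∏ k, ε k ^ m k = -1 := by
    simp only [ε, Pi.mul_apply, mul_pow, Finset.prod_mul_distrib]
    rw [Fintype.prod_eq_single i (by intro k hk; simp [hk]),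
      Fintype.prod_eq_single j (by intro k hk; simp [hk])]
    simp [hi.neg_one_pow, hj.neg_one_pow]
  have h := coeff_signedPerm_one ε m f
  rw [hf ε hε, hεm, Units.neg_smul, one_smul, eq_neg_iff_add_eq_zero, ← two_mul] at h
  exact mem_support_iff.1 hm ((mul_eq_zero.1 h).resolve_left two_ne_zero)

end Expand

theorem exists_isSymmetric_of_forall_signedPerm_eq {n : ℕ} [NeZero n] {K : Type*} [Field K]
    [NeZero (2 : K)] {f : MvPolynomial (Fin n) K}
    (hf : ∀ (ε : Fin n → ℤˣ), ∏ i, ε i = 1 → ∀ e ∈ alternatingGroup (Fin n),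
      signedPerm ε e f = f) :
    ∃ p q p' q' : MvPolynomial (Fin n) K,
      p.IsSymmetric ∧ q.IsSymmetric ∧ p'.IsSymmetric ∧ q'.IsSymmetric ∧
        f = expand 2 (p + q * vandermondePoly n K) +
          expand 2 (p' + q' * vandermondePoly n K) * ∏ i, X i := by
  obtain ⟨g, h, rfl⟩ := exists_eq_expand_two_add_expand_two_mul_prod_X fun m hm =>
    forall_even_or_forall_odd_of_signedPerm_eq (fun ε hε => hf ε hε 1 (one_mem _)) hm
  have hgh : ∀ e ∈ alternatingGroup (Fin n),
      rename e g - g = 0 ∧ rename e h - h = 0 := by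
    intro e he
    have H := hf 1 (by simp) e he
    rw [map_add, map_mul, signedPerm_expand_two, signedPerm_expand_two, signedPerm_prod_X] at H
    apply expand_two_add_expand_two_mul_prod_X_eq_zero
    simp only [Pi.one_apply, Finset.prod_const_one, one_smul] at H
    rw [map_sub, map_sub]
    linear_combination H
  obtain ⟨p, q, hp, hq, rfl⟩ :=
    exists_isSymmetric_add_mul_vandermondePoly fun e he => sub_eq_zero.1 (hgh e he).1
  obtain ⟨p', q', hp', hq', rfl⟩ :=
    exists_isSymmetric_add_mul_vandermondePoly fun e he => sub_eq_zero.1 (hgh e he).2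
  exact ⟨p, q, p', q', hp, hq, hp', hq', rfl⟩

section SymmetricSubalgebra

variable {σ R : Type*} [CommRing R]

theorem isIntegral_X_symmetricSubalgebra [Finite σ] (i : σ) :
    IsIntegral (symmetricSubalgebra σ R) (X i : MvPolynomial σ R) := by
  have := Fintype.ofFinite σ
  let P : Polynomial (MvPolynomial σ R) := ∏ j, (Polynomial.X - Polynomial.C (X j))
  have hP (e : Equiv.Perm σ) : P.map (rename e : _ →ₐ[R] MvPolynomial σ R).toRingHom = P := by
    simp [P, Polynomial.map_prod,
      Equiv.prod_comp e fun j => Polynomial.X - Polynomial.C (X j : MvPolynomial σ R)]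
  have hlift : P ∈ Polynomial.lifts (algebraMap (symmetricSubalgebra σ R) (MvPolynomial σ R)) := by
    refine (Polynomial.lifts_iff_coeff_lifts _).2 fun k => ⟨⟨P.coeff k, fun e => ?_⟩, rfl⟩
    simpa using congrArg (Polynomial.coeff · k) (hP e)
  obtain ⟨Q, hQ, -, hQm⟩ :=
    Polynomial.lifts_and_natDegree_eq_and_monic hlift (Polynomial.monic_prod_X_sub_C X Finset.univ)
  refine ⟨Q, hQm, ?_⟩
  rw [← Polynomial.eval_map, hQ, Polynomial.eval_prod]
  exact Finset.prod_eq_zero (Finset.mem_univ i) (by simp)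

theorem isIntegral_of_expand_mem [Finite σ] {A : Subalgebra R (MvPolynomial σ R)} {k : ℕ}
    (hk : 0 < k)
    (hA : ∀ p : MvPolynomial σ R, p.IsSymmetric → expand k p ∈ A) (f : MvPolynomial σ R) :
    IsIntegral A f := by
  have hX (i : σ) : IsIntegral A (X i : MvPolynomial σ R) := by
    let ψ : symmetricSubalgebra σ R →ₐ[R] A :=
      ((expand k).comp (symmetricSubalgebra σ R).val).codRestrict A fun p => hA p p.2
    have h := (isIntegral_X_symmetricSubalgebra (R := R) i).map_of_comp_eq ψ.toRingHom
      (expand k (R := R)).toRingHom rfl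
    exact .of_pow hk (by simpa using h)
  induction f using MvPolynomial.induction_on with
  | C c => exact isIntegral_algebraMap (x := algebraMap R A c)
  | add p q hp hq => exact hp.add hq
  | mul_X p i hp => exact hp.mul (hX i)

theorem algebraicIndependent_of_expand_mem [Finite σ] [IsDomain R] {x : σ → MvPolynomial σ R}
    {k : ℕ} (hk : 0 < k)
    (hx : ∀ p : MvPolynomial σ R, p.IsSymmetric → expand k p ∈ Algebra.adjoin R (Set.range x)) :
    AlgebraicIndependent R x := by
  have : Algebra.IsIntegral (Algebra.adjoin R (Set.range x)) (MvPolynomial σ R) :=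
    ⟨isIntegral_of_expand_mem hk hx⟩
  refine (Algebra.IsAlgebraic.isTranscendenceBasis_of_lift_le_trdeg_of_finite R x ?_).1
  rw [MvPolynomial.trdeg_of_isDomain]
  simp

theorem mem_of_isSymmetric_of_esymm_mem [Fintype σ] {B : Subalgebra R (MvPolynomial σ R)}
    (hB : ∀ i : Fin (Fintype.card σ), esymm σ R (i + 1) ∈ B) {p : MvPolynomial σ R}
    (hp : p.IsSymmetric) : p ∈ B := by
  obtain ⟨P, hP⟩ := (esymmAlgEquiv σ R rfl).surjective ⟨p, hp⟩
  have hP' : aeval (fun i : Fin _ => esymm σ R (i + 1)) P = p := by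
    rw [← esymmAlgHom_apply]
    exact congrArg Subtype.val hP
  refine Algebra.adjoin_le (Set.range_subset_iff.2 hB) ?_
  rw [Algebra.adjoin_range_eq_range_aeval]
  exact ⟨P, hP'⟩

end SymmetricSubalgebra

section Invariants

instance neZero_two_F3 : NeZero (2 : F3) := ⟨by decide⟩

theorem three_eq_zero : (3 : S3) = 0 := CharP.ofNat_eq_zero S3 3

theorem a1_eq_expand : a1 = expand 2 (psum (Fin 3) F3 1) := by
  simp [a1, psum, Fin.sum_univ_three]

theorem a2_eq_prod_X : a2 = ∏ i, X i := by
  rw [a2, Fin.prod_univ_three]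

theorem a3_eq_expand : a3 = expand 2 (psum (Fin 3) F3 2) := by
  simp [a3, psum, Fin.sum_univ_three, ← pow_mul]

theorem bP_eq : bP = expand 2 (vandermondePoly 3 F3) - a1 * (a3 - a1 ^ 2) := by
  simp only [vandermondePoly_three, bP, a1, a3, map_mul, map_sub, expand_X]
  linear_combination -(2 * X 0 ^ 2 * X 1 ^ 2 * X 2 ^ 2 + X 0 ^ 2 * X 1 ^ 4 + X 0 ^ 4 * X 2 ^ 2 +
    X 1 ^ 2 * X 2 ^ 4) * three_eq_zero

theorem isSymmetric_av (s : Fin 3) : (av s).IsSymmetric := by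
  intro e
  fin_cases s
  · change rename e a1 = a1
    rw [a1_eq_expand, rename_expand, rename_psum]
  · change rename e a2 = a2
    rw [a2_eq_prod_X, map_prod]
    simp only [rename_X, Equiv.prod_comp e X]
  · change rename e a3 = a3
    rw [a3_eq_expand, rename_expand, rename_psum]

theorem signedPerm_av {ε : Fin 3 → ℤˣ} {e : Equiv.Perm (Fin 3)} (hε : ∏ i, ε i = 1) (s : Fin 3) :
    signedPerm ε e (av s) = av s := by
  fin_cases s
  · change signedPerm ε e a1 = a1
    rw [a1_eq_expand, signedPerm_expand_two, rename_psum]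
  · change signedPerm ε e a2 = a2
    rw [a2_eq_prod_X, signedPerm_prod_X, hε, one_smul]
  · change signedPerm ε e a3 = a3
    rw [a3_eq_expand, signedPerm_expand_two, rename_psum]

theorem signedPerm_bP {ε : Fin 3 → ℤˣ} {e : Equiv.Perm (Fin 3)} (hε : ∏ i, ε i = 1)
    (he : e ∈ alternatingGroup (Fin 3)) : signedPerm ε e bP = bP := by
  have h1 : signedPerm ε e a1 = a1 := signedPerm_av hε 0
  have h3 : signedPerm ε e a3 = a3 := signedPerm_av hε 2
  rw [Equiv.Perm.mem_alternatingGroup] at he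
  simp [bP_eq, h1, h3, signedPerm_expand_two, isAlternating_vandermondePoly e, he]

theorem esymm_two_eq : esymm (Fin 3) F3 2 = X 0 * X 1 + X 0 * X 2 + X 1 * X 2 := by
  have h : Finset.powersetCard 2 (Finset.univ : Finset (Fin 3)) = {{0, 1}, {0, 2}, {1, 2}} := by
    decide
  rw [esymm, h, Finset.sum_insert (by decide), Finset.sum_insert (by decide), Finset.sum_singleton]
  simp [add_assoc]

theorem expand_two_esymm_one : expand 2 (esymm (Fin 3) F3 1) = a1 := by
  rw [a1_eq_expand, esymm_one, psum_one]

theorem expand_two_esymm_two : expand 2 (esymm (Fin 3) F3 2) = a3 - a1 ^ 2 := by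
  simp only [esymm_two_eq, a1, a3, map_add, map_mul, expand_X]
  linear_combination (X 0 ^ 2 * X 1 ^ 2 + X 0 ^ 2 * X 2 ^ 2 + X 1 ^ 2 * X 2 ^ 2) * three_eq_zero

theorem expand_two_esymm_three : expand 2 (esymm (Fin 3) F3 3) = a2 ^ 2 := by
  have h : esymm (Fin 3) F3 3 = ∏ i, X i := by
    have huniv : Finset.powersetCard 3 (Finset.univ : Finset (Fin 3)) = {Finset.univ} :=
      Finset.powersetCard_self _
    rw [esymm, huniv, Finset.sum_singleton]
  rw [h, a2_eq_prod_X, map_prod, ← Finset.prod_pow]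
  simp only [expand_X]

theorem expand_two_mem_adjoin_av {p : S3} (hp : p.IsSymmetric) :
    expand 2 p ∈ Algebra.adjoin F3 (Set.range av) := by
  set A : Subalgebra F3 S3 := Algebra.adjoin F3 (Set.range av)
  have hav (s : Fin 3) : av s ∈ A := Algebra.subset_adjoin ⟨s, rfl⟩
  suffices h : p ∈ A.comap (expand 2) from h
  refine mem_of_isSymmetric_of_esymm_mem (fun i => ?_) hp
  rw [Subalgebra.mem_comap]
  change Fin 3 at i
  fin_cases i
  · exact expand_two_esymm_one ▸ hav 0
  · exact expand_two_esymm_two ▸ sub_mem (hav 2) (pow_mem (hav 0) 2)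
  · exact expand_two_esymm_three ▸ pow_mem (hav 1) 2

theorem exists_aeval_av_add_aeval_av_mul_bP_eq {p q : S3} (hp : p.IsSymmetric)
    (hq : q.IsSymmetric) :
    ∃ P Q : S3, aeval av P + aeval av Q * bP = expand 2 (p + q * vandermondePoly 3 F3) := by
  have hex {r : S3} (hr : r.IsSymmetric) : ∃ P : S3, aeval av P = expand 2 r := by
    simpa [Algebra.adjoin_range_eq_range_aeval] using expand_two_mem_adjoin_av hr
  obtain ⟨P, hP⟩ := hex hp
  obtain ⟨Q, hQ⟩ := hex hq
  refine ⟨P + Q * (X 0 * (X 2 - X 0 ^ 2)), Q, ?_⟩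
  have h0 : av 0 = a1 := rfl
  have h2 : av 2 = a3 := rfl
  simp only [map_add, map_mul, map_sub, map_pow, aeval_X, hP, hQ, h0, h2, bP_eq]
  ring

theorem algebraicIndependent_av : AlgebraicIndependent F3 av :=
  algebraicIndependent_of_expand_mem two_pos fun _ => expand_two_mem_adjoin_av

theorem rename_swap_bP_ne : rename (Equiv.swap (0 : Fin 3) 1) bP ≠ bP := by
  have h1 : rename (Equiv.swap (0 : Fin 3) 1) a1 = a1 := isSymmetric_av 0 _
  have h3 : rename (Equiv.swap (0 : Fin 3) 1) a3 = a3 := isSymmetric_av 2 _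
  have hΔ : expand 2 (vandermondePoly 3 F3) ≠ 0 :=
    (expand_eq_zero two_pos).not.2 vandermondePoly_ne_zero
  intro h
  rw [bP_eq, map_sub, map_mul, map_sub, map_pow, h1, h3, rename_expand,
    isAlternating_vandermondePoly, Equiv.Perm.sign_swap (by decide), Units.neg_smul, one_smul,
    map_neg] at h
  exact mul_ne_zero two_ne_zero hΔ (by linear_combination -h)

theorem eq_zero_of_aeval_av_add_aeval_av_mul_bP_eq_zero {p q : S3}
    (h : aeval av p + aeval av q * bP = 0) : p = 0 ∧ q = 0 := by
  set τ : S3 →ₐ[F3] S3 := rename (Equiv.swap 0 1)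
  have hτ (r : S3) : τ (aeval av r) = aeval av r := by
    rw [comp_aeval_apply]
    simp only [τ, isSymmetric_av _ _]
  have hav {r : S3} (hr : aeval av r = 0) : r = 0 :=
    algebraicIndependent_av.eq_zero_of_aeval_eq_zero r hr
  exact (eq_zero_of_add_mul_eq_zero_of_map_ne τ.toRingHom (hτ p) (hτ q) rename_swap_bP_ne h).imp
    hav hav

theorem exists_rep_eq_signedPermMatrix (g : G3) :
    ∃ (ε : Fin 3 → ℤˣ) (e : Equiv.Perm (Fin 3)),
      ∏ i, ε i = 1 ∧ e ∈ alternatingGroup (Fin 3) ∧ rep g = signedPermMatrix ε e := by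
  simp only [Equiv.Perm.mem_alternatingGroup]
  revert g
  decide +kernel

theorem signedPermMatrix_mem_range_rep {ε : Fin 3 → ℤˣ} {e : Equiv.Perm (Fin 3)}
    (hε : ∏ i, ε i = 1) (he : e ∈ alternatingGroup (Fin 3)) :
    signedPermMatrix ε e ∈ Set.range rep := by
  rw [Equiv.Perm.mem_alternatingGroup] at he
  rw [Set.mem_range]
  revert ε e
  decide +kernel

theorem det_rep (g : G3) : (rep g).det = 1 := by
  obtain ⟨ε, e, hε, he, hg⟩ := exists_rep_eq_signedPermMatrix g
  rw [hg, det_signedPermMatrix, hε, Equiv.Perm.mem_alternatingGroup.1 he]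
  simp

theorem actS_eq_signedPerm {g : G3} {ε : Fin 3 → ℤˣ} {e : Equiv.Perm (Fin 3)}
    (h : rep g = signedPermMatrix ε e) : actS g = signedPerm ε e := by
  rw [actS, h, aeval_sum_signedPermMatrix]

theorem forall_actS_eq_iff {f : S3} :
    (∀ g, actS g f = f) ↔ ∃ p q : S3, aeval av p + aeval av q * bP = f := by
  constructor
  · intro hf
    obtain ⟨p, q, p', q', hp, hq, hp', hq', rfl⟩ :=
      exists_isSymmetric_of_forall_signedPerm_eq fun ε hε e he => by
        obtain ⟨g, hg⟩ := signedPermMatrix_mem_range_rep hε he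
        rw [← actS_eq_signedPerm hg, hf]
    obtain ⟨P, Q, hPQ⟩ := exists_aeval_av_add_aeval_av_mul_bP_eq hp hq
    obtain ⟨P', Q', hPQ'⟩ := exists_aeval_av_add_aeval_av_mul_bP_eq hp' hq'
    refine ⟨P + P' * X 1, Q + Q' * X 1, ?_⟩
    have h1 : av 1 = a2 := rfl
    simp only [map_add, map_mul, aeval_X, h1, ← hPQ, ← hPQ', ← a2_eq_prod_X]
    ring
  · rintro ⟨p, q, rfl⟩ g
    obtain ⟨ε, e, hε, he, hg⟩ := exists_rep_eq_signedPermMatrix g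
    have hav (r : S3) : signedPerm ε e (aeval av r) = aeval av r := by
      rw [comp_aeval_apply]
      simp only [signedPerm_av hε]
    rw [actS_eq_signedPerm hg, map_add, map_mul, hav, hav, signedPerm_bP hε he]

theorem y123_eq_ιMulti : y123 = ExteriorAlgebra.ιMulti F3 3 (Pi.basisFun F3 (Fin 3)) := by
  simp [y123, yy, ExteriorAlgebra.ιMulti_apply, mul_assoc, vecTail]

theorem map_repL_y123 (g : G3) : ExteriorAlgebra.map (repL g) y123 = y123 := by
  rw [y123_eq_ιMulti, ExteriorAlgebra.map_apply_ιMulti, alternatingMap_comp_basis_eq_det_smul,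
    repL, LinearMap.det_toLin', det_transpose, det_rep, one_smul]

theorem actR_tmul_y123 (g : G3) (f : S3) : actR g (f ⊗ₜ[F3] y123) = actS g f ⊗ₜ[F3] y123 := by
  rw [actR, Algebra.TensorProduct.map_tmul, map_repL_y123]

theorem tmul_y123_injective : Function.Injective fun f : S3 => f ⊗ₜ[F3] y123 := by
  obtain ⟨φ, hφ⟩ := exists_dual_ιMulti_basis_eq_one (Pi.basisFun F3 (Fin 3))
  exact tmul_left_injective_of_apply_eq_one φ (y123_eq_ιMulti ▸ hφ)

end Invariants

/-- An element `f·y₁y₂y₃` of `R` is fixed by `G` iff `f ∈ S^G`, and the `G`-invariant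
3-forms form a free `A`-module with basis `{y₁y₂y₃, b·y₁y₂y₃}`: the map
`(p,q) ↦ (p(a₁,a₂,a₃) + q(a₁,a₂,a₃)·b)·y₁y₂y₃` is injective with image exactly the set
of `G`-fixed elements of `R` of the form `f·y₁y₂y₃`. -/
theorem stmt13 :
    (∀ f : S3,
      (∀ g : G3, actR g (f ⊗ₜ[F3] y123) = f ⊗ₜ[F3] y123) ↔ (∀ g : G3, actS g f = f)) ∧
    Function.Injective Phi13 ∧
    Set.range Phi13 =
      {z : Rf | (∃ f : S3, z = f ⊗ₜ[F3] y123) ∧ ∀ g : G3, actR g z = z} := by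
  refine ⟨fun f => ?_, ?_, ?_⟩
  · simp only [actR_tmul_y123, tmul_y123_injective.eq_iff]
  · rintro ⟨p, q⟩ ⟨p', q'⟩ h
    have hsub : aeval av (p - p') + aeval av (q - q') * bP = 0 := by
      rw [map_sub, map_sub]
      linear_combination tmul_y123_injective h
    obtain ⟨hp, hq⟩ := eq_zero_of_aeval_av_add_aeval_av_mul_bP_eq_zero hsub
    rw [sub_eq_zero.1 hp, sub_eq_zero.1 hq]
  · ext z
    constructor
    · rintro ⟨⟨p, q⟩, rfl⟩
      refine ⟨⟨_, rfl⟩, fun g => ?_⟩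
      rw [Phi13, actR_tmul_y123, forall_actS_eq_iff.2 ⟨p, q, rfl⟩]
    · rintro ⟨⟨f, rfl⟩, hf⟩
      obtain ⟨p, q, rfl⟩ := forall_actS_eq_iff.1 fun g =>
        tmul_y123_injective ((actR_tmul_y123 g f).symm.trans (hf g))
      exact ⟨(p, q), rfl⟩
end

section
/- The fixed subalgebra R^G equals the 𝔽₃-subalgebra of R generated by the fourteen elements {a₁, a₂, a₃, b, c₁, c₂, c₃, c₄, c₅, c₆, d₁, d₂, d₃, y₁y₂y₃}. -/
open Matrix MvPolynomial

set_option synthInstance.maxHeartbeats 1000000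
set_option maxHeartbeats 1000000

open TensorProduct

/-- The fixed subalgebra `R^G`. -/
noncomputable def RG : Subalgebra F3 Rf where
  carrier := {z | ∀ g : G3, actR g z = z}
  add_mem' := fun ha hb g => by rw [map_add, ha g, hb g]
  mul_mem' := fun ha hb g => by rw [_root_.map_mul, ha g, hb g]
  algebraMap_mem' := fun r g => by rw [AlgHom.commutes]

/-- The fourteen generators `a₁, a₂, a₃, b, c₁, …, c₆, d₁, d₂, d₃, y₁y₂y₃`,
viewed as elements of `R`. -/
noncomputable def gens : Fin 14 → Rf :=
  ![a1 ⊗ₜ[F3] (1 : Lam), a2 ⊗ₜ[F3] (1 : Lam), a3 ⊗ₜ[F3] (1 : Lam), bP ⊗ₜ[F3] (1 : Lam),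
    c1, c2, c3, c4, c5, c6, d1, d2, d3, (1 : S3) ⊗ₜ[F3] y123]

/-!
The quaternion group `Q₈ = ⟨i, j⟩` acts by signs on the monomials in the `x_s` and `y_s`, and
`G = Q₈ ⋊ ⟨t⟩`, where `t` permutes the indices cyclically. Hence the components of degree `0` and
`3` of an invariant form are invariant polynomials, while those of degree `1` and `2` are the
traces over `⟨t⟩` of their terms in `y₁` and `y₂y₃`. An invariant polynomial is itself a trace plus
a polynomial in `a₂ = x₁x₂x₃`, because `t` only fixes the monomials `a₂ᵏ`. The coefficients whose
traces occur are fixed by `i` and fixed or negated by `j`, which is a parity condition on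
exponents. Since `x₁², x₂², x₃²` are the roots of a monic cubic over `𝔽₃[a₁, a₂, a₃]`, these
polynomials are spanned over `𝔽₃[a₁, a₂, a₃]` by six explicit monomials in either case. The traces
of these monomials lie in `𝔽₃[a₁, a₂, a₃, b]` in degree `0`; they are `c₁, …, c₆` in degree `1` and
`d₁, …, d₆` in degree `2`, and `d₄, d₅, d₆` are combinations of `d₁, d₂, d₃` and of products of the
`c_k`.
-/

section MvPolynomialLemmas

variable {σ R : Type*} [CommRing R]

theorem aeval_smul_X_monomial [Fintype σ] (ε : σ → R) (n : σ →₀ ℕ) (c : R) :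
    aeval (fun s => ε s • (X s : MvPolynomial σ R)) (monomial n c) =
      (∏ s, ε s ^ n s) • monomial n c := by
  rw [aeval_monomial, algebraMap_eq, monomial_eq, Finsupp.prod_fintype _ _ (by simp),
    Finsupp.prod_fintype _ _ (by simp)]
  simp only [smul_eq_C_mul, mul_pow, Finset.prod_mul_distrib, map_prod, map_pow]
  ring

theorem coeff_aeval_smul_X [Fintype σ] (ε : σ → R) (f : MvPolynomial σ R) (n : σ →₀ ℕ) :
    coeff n (aeval (fun s => ε s • (X s : MvPolynomial σ R)) f) =
      (∏ s, ε s ^ n s) * coeff n f := by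
  classical
  induction f using MvPolynomial.induction_on' with
  | monomial m c =>
    rw [aeval_smul_X_monomial, coeff_smul, smul_eq_mul, coeff_monomial]
    split_ifs with h <;> simp [h]
  | add p q hp hq => rw [map_add, coeff_add, coeff_add, hp, hq, mul_add]

theorem prod_pow_eq_of_aeval_smul_X_eq_smul [Fintype σ] [IsDomain R] {ε : σ → R} {c : R}
    {f : MvPolynomial σ R} (h : aeval (fun s => ε s • (X s : MvPolynomial σ R)) f = c • f)
    {n : σ →₀ ℕ} (hn : n ∈ f.support) : ∏ s, ε s ^ n s = c := by
  refine mul_right_cancel₀ (mem_support_iff.1 hn) ?_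
  rw [← coeff_aeval_smul_X, h, coeff_smul, smul_eq_mul]

/-- The part of a polynomial supported on the exponents satisfying `P`. -/
noncomputable def supportPart (P : (σ →₀ ℕ) → Prop) [DecidablePred P] (f : MvPolynomial σ R) :
    MvPolynomial σ R :=
  .ofCoeff ((AddMonoidAlgebra.coeff f).filter P)

theorem coeff_supportPart (P : (σ →₀ ℕ) → Prop) [DecidablePred P] (f : MvPolynomial σ R)
    (n : σ →₀ ℕ) : coeff n (supportPart P f) = if P n then coeff n f else 0 :=
  Finsupp.filter_apply P (AddMonoidAlgebra.coeff f) n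

theorem mem_support_supportPart {P : (σ →₀ ℕ) → Prop} [DecidablePred P] {f : MvPolynomial σ R}
    {n : σ →₀ ℕ} : n ∈ (supportPart P f).support ↔ P n ∧ n ∈ f.support := by
  simp only [mem_support_iff, coeff_supportPart]
  grind

theorem aeval_smul_X_supportPart [Finite σ] (ε : σ → R) (P : (σ →₀ ℕ) → Prop) [DecidablePred P]
    (f : MvPolynomial σ R) :
    aeval (fun s => ε s • (X s : MvPolynomial σ R)) (supportPart P f) =
      supportPart P (aeval (fun s => ε s • (X s : MvPolynomial σ R)) f) := by
  have := Fintype.ofFinite σ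
  ext n
  simp only [coeff_aeval_smul_X, coeff_supportPart, mul_ite, mul_zero]

theorem coeff_rename_finRotate (f : MvPolynomial (Fin 3) R) (n : Fin 3 →₀ ℕ) :
    coeff n (rename (finRotate 3) f) = coeff (n.mapDomain (finRotate 3).symm) f := by
  rw [← coeff_rename_mapDomain (finRotate 3) (finRotate 3).injective f, ← Finsupp.mapDomain_comp]
  simp

/-- Cyclic rotation permutes the exponents in orbits of size three, apart from the constant ones,
and `n 0 < n 1 ∧ n 0 ≤ n 2` selects one exponent in each of these orbits. -/
theorem eq_supportPart_add_sum_rename {f : MvPolynomial (Fin 3) R}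
    (h : rename (finRotate 3) f = f) :
    f = supportPart (fun n => n 0 = n 1 ∧ n 1 = n 2) f +
      (supportPart (fun n => n 0 < n 1 ∧ n 0 ≤ n 2) f +
        rename (finRotate 3) (supportPart (fun n => n 0 < n 1 ∧ n 0 ≤ n 2) f) +
        rename (finRotate 3) (rename (finRotate 3)
          (supportPart (fun n => n 0 < n 1 ∧ n 0 ≤ n 2) f))) := by
  have hf (n : Fin 3 →₀ ℕ) : coeff (n.mapDomain (finRotate 3).symm) f = coeff n f := by
    rw [← coeff_rename_finRotate, h]
  have hn (n : Fin 3 →₀ ℕ) (s : Fin 3) : n.mapDomain (finRotate 3).symm s = n (s + 1) := by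
    rw [Finsupp.mapDomain_equiv_apply, Equiv.symm_symm, finRotate_apply]
  ext n
  simp only [coeff_add, coeff_rename_finRotate, coeff_supportPart, hn, hf, Fin.isValue,
    Fin.reduceAdd]
  split_ifs <;> first | lia | simp

end MvPolynomialLemmas

section StableSubmodules

theorem mul_mem_of_mem_adjoin {A B : Type*} [CommSemiring A] [Semiring B] [Algebra A B]
    {s : Set B} {N : Submodule A B}
    (hs : ∀ r ∈ s, ∀ f ∈ N, r * f ∈ N) {r : B} (hr : r ∈ Algebra.adjoin A s) :
    ∀ f ∈ N, r * f ∈ N := by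
  induction hr using Algebra.adjoin_induction with
  | mem r hr => exact hs r hr
  | algebraMap a => exact fun f hf => Algebra.smul_def a f ▸ N.smul_mem a hf
  | add p q _ _ hp hq => exact fun f hf => add_mul p q f ▸ add_mem (hp f hf) (hq f hf)
  | mul p q _ _ hp hq => exact fun f hf => mul_assoc p q f ▸ hp _ (hq f hf)

theorem mul_mem_span_of_forall_mul_mem {A B : Type*} [CommSemiring A] [Semiring B] [Algebra A B]
    {s : Set B} {r : B}
    (hs : ∀ g ∈ s, r * g ∈ Submodule.span A s) :
    ∀ f ∈ Submodule.span A s, r * f ∈ Submodule.span A s :=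
  fun _ hf => (Submodule.map_span_le (LinearMap.mulLeft A r) s _).2 hs
    (Submodule.mem_map_of_mem hf)

/-- If `e₁, e₂` are the first two elementary symmetric functions of `u, v, w`, then `v` is a root
of the quadratic `X² - (e₁ - u) X + (u² - e₁ u + e₂)`. -/
theorem mul_mem_sup_map_mulLeft {A B : Type*} [CommRing A] [CommRing B] [Algebra A B]
    {P : Submodule A B} {u v w : B} {e₁ e₂ : A}
    (h₁ : u + v + w = algebraMap A B e₁) (h₂ : u * v + v * w + w * u = algebraMap A B e₂)
    (hu : ∀ f ∈ P, u * f ∈ P) {r : B} (hr : r ∈ Algebra.adjoin A {u, v}) :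
    ∀ f ∈ P ⊔ P.map (LinearMap.mulLeft A v), r * f ∈ P ⊔ P.map (LinearMap.mulLeft A v) := by
  set N := P ⊔ P.map (LinearMap.mulLeft A v) with hN
  have hP {p} (hp : p ∈ P) : p ∈ N := Submodule.mem_sup_left hp
  have hv {p} (hp : p ∈ P) : v * p ∈ N := Submodule.mem_sup_right (Submodule.mem_map_of_mem hp)
  have hvv {p} (hp : p ∈ P) : v * (v * p) ∈ N := by
    have hquad : v * (v * p) =
        e₁ • (v * p) - v * (u * p) - u * (u * p) + e₁ • (u * p) - e₂ • p := by
      simp only [Algebra.smul_def, ← h₁, ← h₂]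
      ring
    rw [hquad]
    have hup := hu p hp
    exact sub_mem (add_mem (sub_mem (sub_mem (N.smul_mem _ (hv hp)) (hv hup)) (hP (hu _ hup)))
      (N.smul_mem _ (hP hup))) (N.smul_mem _ (hP hp))
  refine mul_mem_of_mem_adjoin ?_ hr
  rintro r (rfl | rfl) f hf <;> obtain ⟨p, hp, _, ⟨q, hq, rfl⟩, rfl⟩ := Submodule.mem_sup.1 hf <;>
    rw [mul_add, LinearMap.mulLeft_apply]
  · exact add_mem (hP (hu p hp)) (mul_left_comm r v q ▸ hv (hu q hq))
  · exact add_mem (hv hp) (hvv hq)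

end StableSubmodules

section GroupAction

theorem rep_im : rep im = diagonal ![1, -1, -1] := by decide +kernel

theorem rep_jm : rep jm = diagonal ![-1, -1, 1] := by decide +kernel

theorem rep_tm : rep tm = of fun s r => if r = s + 1 then 1 else 0 := by decide +kernel

theorem rep_one : rep 1 = 1 := by decide +kernel

theorem sum_coordM_smul_V {X : Matrix (Fin 2) (Fin 2) F3} (hX : X.trace = 0) :
    ∑ q, coordM q X • V q = X := by
  rw [trace_fin_two] at hX
  ext i j
  fin_cases i <;> fin_cases j <;> simp [Fin.sum_univ_three, coordM, V] <;> grind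

theorem coordM_sum_smul (s : Fin 3) (c : Fin 3 → F3)
    (Y : Fin 3 → Matrix (Fin 2) (Fin 2) F3) :
    coordM s (∑ q, c q • Y q) = ∑ q, c q * coordM s (Y q) := by
  fin_cases s <;> simp [Fin.sum_univ_three, coordM] <;> ring

theorem trace_inv_mul_V_mul (g : G3) (r : Fin 3) :
    ((g⁻¹ : G3) * V r * (g : Matrix (Fin 2) (Fin 2) F3)).trace = 0 := by
  have hg : (g : Matrix (Fin 2) (Fin 2) F3) * ((g⁻¹ : G3) : Matrix (Fin 2) (Fin 2) F3) = 1 :=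
    congrArg Subtype.val (mul_inv_cancel g)
  rw [trace_mul_cycle, hg, one_mul]
  revert r
  decide

theorem rep_mul (g h : G3) : rep (g * h) = rep h * rep g := by
  have hmul : ((g * h : G3) : Matrix (Fin 2) (Fin 2) F3) = g * h := rfl
  have hinv : (((g * h)⁻¹ : G3) : Matrix (Fin 2) (Fin 2) F3) = (h⁻¹ : G3) * (g⁻¹ : G3) :=
    congrArg Subtype.val (_root_.mul_inv_rev g h)
  ext s r
  simp only [rep, of_apply, Matrix.mul_apply]
  calc coordM s (((g * h)⁻¹ : G3) * V r * ((g * h : G3) : Matrix (Fin 2) (Fin 2) F3))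
    _ = coordM s ((h⁻¹ : G3) * ((g⁻¹ : G3) * V r * (g : Matrix (Fin 2) (Fin 2) F3)) *
          (h : Matrix (Fin 2) (Fin 2) F3)) := by
        simp only [hinv, hmul, Matrix.mul_assoc]
    _ = coordM s (∑ q, coordM q ((g⁻¹ : G3) * V r * (g : Matrix (Fin 2) (Fin 2) F3)) •
          ((h⁻¹ : G3) * V q * (h : Matrix (Fin 2) (Fin 2) F3))) := by
        nth_rw 1 [← sum_coordM_smul_V (trace_inv_mul_V_mul g r)]
        simp only [Matrix.mul_sum, Matrix.sum_mul, Matrix.mul_smul, Matrix.smul_mul]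
    _ = _ := by
        rw [coordM_sum_smul]
        exact Finset.sum_congr rfl fun q _ => mul_comm _ _

theorem closure_im_jm_tm : Submonoid.closure {im, jm, tm} = ⊤ := by
  have h : ∀ g : G3, ∃ (a : Fin 4) (b : Fin 2) (c : Fin 3),
      im ^ (a : ℕ) * jm ^ (b : ℕ) * tm ^ (c : ℕ) = g := by decide +kernel
  refine eq_top_iff.2 fun g _ => ?_
  obtain ⟨a, b, c, rfl⟩ := h g
  exact mul_mem (mul_mem (pow_mem (Submonoid.subset_closure (by simp)) _)
    (pow_mem (Submonoid.subset_closure (by simp)) _))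
    (pow_mem (Submonoid.subset_closure (by simp)) _)

theorem im_mul_tm : im * tm = tm * jm := by decide +kernel

theorem jm_mul_tm : jm * tm = tm * (im * jm) := by decide +kernel

theorem tm_pow_three : tm ^ 3 = 1 := by decide +kernel

theorem actS_X (g : G3) (s : Fin 3) : actS g (X s) = ∑ r, rep g s r • X r := aeval_X _ _

theorem map_repL_yy (g : G3) (s : Fin 3) :
    ExteriorAlgebra.map (repL g) (yy s) = ∑ r, rep g s r • yy r := by
  rw [yy, ExteriorAlgebra.map_apply_ι]
  simp only [yy, ← map_smul, ← map_sum]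
  congr 1
  ext r
  simp [repL, Finset.sum_apply, Pi.single_apply]

theorem actS_one : actS 1 = AlgHom.id F3 S3 :=
  algHom_ext fun s => by simp [actS_X, rep_one, Matrix.one_apply]

theorem actS_mul (g h : G3) : actS (g * h) = (actS g).comp (actS h) := by
  refine algHom_ext fun s => ?_
  simp only [AlgHom.comp_apply, actS_X, map_sum, map_smul, rep_mul, Matrix.mul_apply,
    Finset.sum_smul, Finset.smul_sum, mul_smul]
  exact Finset.sum_comm

theorem repL_one : repL 1 = LinearMap.id := by
  rw [repL, rep_one, transpose_one, toLin'_one]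

theorem repL_mul (g h : G3) : repL (g * h) = repL g ∘ₗ repL h := by
  rw [repL, rep_mul, transpose_mul, toLin'_mul, repL, repL]

theorem actR_tmul (g : G3) (f : S3) (w : Lam) :
    actR g (f ⊗ₜ w) = actS g f ⊗ₜ ExteriorAlgebra.map (repL g) w := rfl

theorem actR_one : actR 1 = AlgHom.id F3 Rf := by
  rw [actR, actS_one, repL_one, ExteriorAlgebra.map_id, Algebra.TensorProduct.map_id]

theorem actR_mul (g h : G3) : actR (g * h) = (actR g).comp (actR h) := by
  rw [actR, actS_mul, repL_mul, ← ExteriorAlgebra.map_comp_map, Algebra.TensorProduct.map_comp]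
  rfl

theorem actR_mul_apply (g h : G3) (z : Rf) : actR (g * h) z = actR g (actR h z) := by
  rw [actR_mul, AlgHom.comp_apply]

theorem mem_RG_iff {z : Rf} : z ∈ RG ↔ actR im z = z ∧ actR jm z = z ∧ actR tm z = z := by
  refine ⟨fun h => ⟨h im, h jm, h tm⟩, fun ⟨him, hjm, htm⟩ g => ?_⟩
  have hg : g ∈ Submonoid.closure {im, jm, tm} := by rw [closure_im_jm_tm]; trivial
  induction hg using Submonoid.closure_induction with
  | mem g hg => rcases hg with rfl | rfl | rfl; exacts [him, hjm, htm]
  | one => rw [actR_one, AlgHom.id_apply]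
  | mul g h _ _ hg hh => rw [actR_mul_apply, hh, hg]

theorem actS_eq_aeval_smul_X {g : G3} {ε : Fin 3 → F3} (h : rep g = diagonal ε) :
    actS g = aeval fun s => ε s • (X s : S3) :=
  algHom_ext fun s => by simp [actS_X, h, diagonal_apply]

theorem actS_supportPart {g : G3} {ε : Fin 3 → F3} (hε : rep g = diagonal ε)
    (P : (Fin 3 →₀ ℕ) → Prop) [DecidablePred P] (f : S3) :
    actS g (supportPart P f) = supportPart P (actS g f) := by
  rw [actS_eq_aeval_smul_X hε, aeval_smul_X_supportPart]

theorem map_repL_yy_of_rep_eq_diagonal {g : G3} {ε : Fin 3 → F3} (h : rep g = diagonal ε)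
    (s : Fin 3) : ExteriorAlgebra.map (repL g) (yy s) = ε s • yy s := by
  simp [map_repL_yy, h, diagonal_apply]

theorem actS_tm_X (s : Fin 3) : actS tm (X s) = X (s + 1) := by
  simp [actS_X, rep_tm]

theorem actS_tm_eq_rename : actS tm = rename (finRotate 3) :=
  algHom_ext fun s => by rw [actS_tm_X, rename_X, finRotate_apply]

theorem map_repL_tm_yy (s : Fin 3) : ExteriorAlgebra.map (repL tm) (yy s) = yy (s + 1) := by
  simp [map_repL_yy, rep_tm]

end GroupAction

section Polynomials

/-- The subalgebra of `S` generated by the primary invariants `a₁, a₂, a₃`. -/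
noncomputable def primaryInv : Subalgebra F3 S3 := Algebra.adjoin F3 {a1, a2, a3}

/-- The primary invariant `a₁` as an element of `primaryInv`. -/
noncomputable def primaryInv.a₁ : primaryInv := ⟨a1, Algebra.subset_adjoin (by simp)⟩

/-- The primary invariant `a₂` as an element of `primaryInv`. -/
noncomputable def primaryInv.a₂ : primaryInv := ⟨a2, Algebra.subset_adjoin (by simp)⟩

/-- The primary invariant `a₃` as an element of `primaryInv`. -/
noncomputable def primaryInv.a₃ : primaryInv := ⟨a3, Algebra.subset_adjoin (by simp)⟩

/-- Generators, over the primary invariants, of the polynomials fixed by `i` and negated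
by `j`. -/
noncomputable def relGen : Fin 6 → S3 :=
  ![X 0, X 1 * X 2, X 0 ^ 3, X 0 * X 1 ^ 2, X 1 ^ 3 * X 2, X 0 ^ 3 * X 1 ^ 2]

/-- Generators, over the primary invariants, of the polynomials fixed by `i` and `j`. -/
noncomputable def invGen : Fin 6 → S3 :=
  ![1, X 0 ^ 2, X 0 ^ 4, X 1 ^ 2, X 0 ^ 2 * X 1 ^ 2, X 0 ^ 4 * X 1 ^ 2]

theorem span_range_relGen : Submodule.span primaryInv (Set.range relGen) =
    Submodule.span primaryInv {X 0, X 1 * X 2, X 0 ^ 3} ⊔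
      (Submodule.span primaryInv {X 0, X 1 * X 2, X 0 ^ 3}).map
        (LinearMap.mulLeft primaryInv (X 1 ^ 2)) := by
  rw [Submodule.map_span, ← Submodule.span_union]
  congr 1
  ext f
  simp only [relGen, range_cons, range_empty, LinearMap.mulLeft_apply, Set.union_empty,
    Set.mem_union, Set.mem_image, Set.mem_insert_iff, Set.mem_singleton_iff]
  grind

theorem span_range_invGen : Submodule.span primaryInv (Set.range invGen) =
    Submodule.span primaryInv {1, X 0 ^ 2, X 0 ^ 4} ⊔
      (Submodule.span primaryInv {1, X 0 ^ 2, X 0 ^ 4}).map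
        (LinearMap.mulLeft primaryInv (X 1 ^ 2)) := by
  rw [Submodule.map_span, ← Submodule.span_union]
  congr 1
  ext f
  simp only [invGen, range_cons, range_empty, LinearMap.mulLeft_apply, Set.union_empty,
    Set.mem_union, Set.mem_image, Set.mem_insert_iff, Set.mem_singleton_iff]
  grind

theorem sum_X_sq :
    (X 0 : S3) ^ 2 + X 1 ^ 2 + X 2 ^ 2 = algebraMap primaryInv S3 primaryInv.a₁ := rfl

theorem prod_X : (X 0 : S3) * X 1 * X 2 = algebraMap primaryInv S3 primaryInv.a₂ := rfl

theorem sum_X_sq_mul_X_sq :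
    (X 0 : S3) ^ 2 * X 1 ^ 2 + X 1 ^ 2 * X 2 ^ 2 + X 2 ^ 2 * X 0 ^ 2 =
      algebraMap primaryInv S3 (primaryInv.a₃ - primaryInv.a₁ ^ 2) := by
  change _ = a3 - a1 ^ 2
  simp only [a1, a3]
  grind

theorem X_zero_sq_mul_mem_span_rel :
    ∀ f ∈ Submodule.span primaryInv {(X 0 : S3), X 1 * X 2, X 0 ^ 3},
    X 0 ^ 2 * f ∈ Submodule.span primaryInv {X 0, X 1 * X 2, X 0 ^ 3} := by
  set P := Submodule.span primaryInv {(X 0 : S3), X 1 * X 2, X 0 ^ 3}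
  have h₀ : X 0 ∈ P := Submodule.subset_span (.inl rfl)
  have h₁ : X 1 * X 2 ∈ P := Submodule.subset_span (.inr (.inl rfl))
  have h₂ : X 0 ^ 3 ∈ P := Submodule.subset_span (.inr (.inr rfl))
  have hprod : (X 0 : S3) ^ 2 * (X 1 * X 2) = primaryInv.a₂ • X 0 := by
    rw [Algebra.smul_def, ← prod_X]
    ring
  have hcube : (X 0 : S3) ^ 2 * X 0 ^ 3 =
      primaryInv.a₁ • X 0 ^ 3 - (primaryInv.a₃ - primaryInv.a₁ ^ 2) • X 0 +
        primaryInv.a₂ • (X 1 * X 2) := by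
    simp only [Algebra.smul_def, ← sum_X_sq_mul_X_sq, ← sum_X_sq, ← prod_X]
    ring
  refine mul_mem_span_of_forall_mul_mem ?_
  rintro _ (rfl | rfl | rfl)
  · rwa [← pow_succ]
  · exact hprod ▸ P.smul_mem _ h₀
  · exact hcube ▸ add_mem (sub_mem (P.smul_mem _ h₂) (P.smul_mem _ h₀)) (P.smul_mem _ h₁)

theorem X_zero_sq_mul_mem_span_inv :
    ∀ f ∈ Submodule.span primaryInv {(1 : S3), X 0 ^ 2, X 0 ^ 4},
    X 0 ^ 2 * f ∈ Submodule.span primaryInv {1, X 0 ^ 2, X 0 ^ 4} := by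
  set P := Submodule.span primaryInv {(1 : S3), X 0 ^ 2, X 0 ^ 4}
  have h₀ : 1 ∈ P := Submodule.subset_span (.inl rfl)
  have h₁ : X 0 ^ 2 ∈ P := Submodule.subset_span (.inr (.inl rfl))
  have h₂ : X 0 ^ 4 ∈ P := Submodule.subset_span (.inr (.inr rfl))
  have hcubic : (X 0 : S3) ^ 2 * X 0 ^ 4 =
      primaryInv.a₁ • X 0 ^ 4 - (primaryInv.a₃ - primaryInv.a₁ ^ 2) • X 0 ^ 2 +
        primaryInv.a₂ ^ 2 • 1 := by
    simp only [Algebra.smul_def, map_pow, ← sum_X_sq_mul_X_sq, ← sum_X_sq, ← prod_X]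
    ring
  refine mul_mem_span_of_forall_mul_mem ?_
  rintro _ (rfl | rfl | rfl)
  · rwa [mul_one]
  · rwa [← pow_add]
  · exact hcubic ▸ add_mem (sub_mem (P.smul_mem _ h₂) (P.smul_mem _ h₁)) (P.smul_mem _ h₀)

theorem mul_mem_span_relGen {r : S3}
    (hr : r ∈ Algebra.adjoin primaryInv {(X 0 : S3) ^ 2, X 1 ^ 2}) :
    ∀ f ∈ Submodule.span primaryInv (Set.range relGen),
      r * f ∈ Submodule.span primaryInv (Set.range relGen) := by
  rw [span_range_relGen]
  exact mul_mem_sup_map_mulLeft sum_X_sq sum_X_sq_mul_X_sq X_zero_sq_mul_mem_span_rel hr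

theorem mul_mem_span_invGen {r : S3}
    (hr : r ∈ Algebra.adjoin primaryInv {(X 0 : S3) ^ 2, X 1 ^ 2}) :
    ∀ f ∈ Submodule.span primaryInv (Set.range invGen),
      r * f ∈ Submodule.span primaryInv (Set.range invGen) := by
  rw [span_range_invGen]
  exact mul_mem_sup_map_mulLeft sum_X_sq sum_X_sq_mul_X_sq X_zero_sq_mul_mem_span_inv hr

theorem X_sq_mem_adjoin (s : Fin 3) :
    (X s : S3) ^ 2 ∈ Algebra.adjoin primaryInv {(X 0 : S3) ^ 2, X 1 ^ 2} := by
  have h₀ : (X 0 : S3) ^ 2 ∈ Algebra.adjoin primaryInv {(X 0 : S3) ^ 2, X 1 ^ 2} :=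
    Algebra.subset_adjoin (.inl rfl)
  have h₁ : (X 1 : S3) ^ 2 ∈ Algebra.adjoin primaryInv {(X 0 : S3) ^ 2, X 1 ^ 2} :=
    Algebra.subset_adjoin (.inr rfl)
  have h₂ : (X 2 : S3) ^ 2 = algebraMap primaryInv S3 primaryInv.a₁ - X 0 ^ 2 - X 1 ^ 2 := by
    rw [← sum_X_sq]
    ring
  fin_cases s
  · exact h₀
  · exact h₁
  · exact h₂ ▸ sub_mem (sub_mem (algebraMap_mem _ primaryInv.a₁) h₀) h₁

theorem monomial_mem_of_prod_X_pow_mod_two_mem {N : Submodule primaryInv S3}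
    (hN : ∀ r ∈ Algebra.adjoin primaryInv {(X 0 : S3) ^ 2, X 1 ^ 2}, ∀ f ∈ N, r * f ∈ N)
    {n : Fin 3 →₀ ℕ} (hn : ∏ s, X s ^ (n s % 2) ∈ N) (c : F3) : monomial n c ∈ N := by
  have hsplit : monomial n c =
      algebraMap F3 primaryInv c • ((∏ s, (X s ^ 2) ^ (n s / 2)) * ∏ s, X s ^ (n s % 2)) := by
    simp only [← Finset.prod_mul_distrib, ← pow_mul, ← pow_add, Nat.div_add_mod]
    rw [algebraMap_smul, monomial_eq, Finsupp.prod_fintype _ _ (by simp), smul_eq_C_mul]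
  rw [hsplit]
  exact N.smul_mem _ (hN _ (prod_mem fun s _ => pow_mem (X_sq_mem_adjoin s) _) _ hn)

theorem prod_pow_eq_of_actS_eq_smul {g : G3} {ε : Fin 3 → F3} (hg : rep g = diagonal ε) {c : F3}
    {f : S3} (h : actS g f = c • f) {n : Fin 3 →₀ ℕ} (hn : n ∈ f.support) :
    ∏ s, ε s ^ n s = c :=
  prod_pow_eq_of_aeval_smul_X_eq_smul (actS_eq_aeval_smul_X hg ▸ h) hn

theorem even_add_of_actS_im {f : S3} (h : actS im f = f) {n : Fin 3 →₀ ℕ}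
    (hn : n ∈ f.support) : Even (n 1 + n 2) := by
  have hsign := prod_pow_eq_of_actS_eq_smul rep_im (h.trans (one_smul F3 f).symm) hn
  rw [← neg_one_pow_eq_one_iff_even (R := F3) (by decide)]
  simpa [Fin.prod_univ_three, pow_add] using hsign

theorem even_add_of_actS_jm {f : S3} (h : actS jm f = f) {n : Fin 3 →₀ ℕ}
    (hn : n ∈ f.support) : Even (n 0 + n 1) := by
  have hsign := prod_pow_eq_of_actS_eq_smul rep_jm (h.trans (one_smul F3 f).symm) hn
  rw [← neg_one_pow_eq_one_iff_even (R := F3) (by decide)]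
  simpa [Fin.prod_univ_three, pow_add] using hsign

theorem odd_add_of_actS_jm {f : S3} (h : actS jm f = -f) {n : Fin 3 →₀ ℕ}
    (hn : n ∈ f.support) : Odd (n 0 + n 1) := by
  have hsign := prod_pow_eq_of_actS_eq_smul rep_jm (h.trans (neg_one_smul F3 f).symm) hn
  rw [← neg_one_pow_eq_neg_one_iff_odd (R := F3) (by decide)]
  simpa [Fin.prod_univ_three, pow_add] using hsign

theorem mem_span_relGen {f : S3} (him : actS im f = f) (hjm : actS jm f = -f) :
    f ∈ Submodule.span primaryInv (Set.range relGen) := by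
  rw [f.as_sum]
  refine sum_mem fun n hn =>
    monomial_mem_of_prod_X_pow_mod_two_mem (fun _ => mul_mem_span_relGen) ?_ _
  have hmod : n 0 % 2 = 1 ∧ n 1 % 2 = 0 ∧ n 2 % 2 = 0 ∨
      n 0 % 2 = 0 ∧ n 1 % 2 = 1 ∧ n 2 % 2 = 1 := by
    have := even_add_of_actS_im him hn
    have := odd_add_of_actS_jm hjm hn
    grind
  obtain ⟨h₀, h₁, h₂⟩ | ⟨h₀, h₁, h₂⟩ := hmod <;> rw [Fin.prod_univ_three, h₀, h₁, h₂]
  · exact Submodule.subset_span ⟨0, by simp [relGen]⟩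
  · exact Submodule.subset_span ⟨1, by simp [relGen]⟩

theorem mem_span_invGen {f : S3} (him : actS im f = f) (hjm : actS jm f = f) :
    f ∈ Submodule.span primaryInv (Set.range invGen) := by
  rw [f.as_sum]
  refine sum_mem fun n hn =>
    monomial_mem_of_prod_X_pow_mod_two_mem (fun _ => mul_mem_span_invGen) ?_ _
  have h_one : 1 ∈ Submodule.span primaryInv (Set.range invGen) := Submodule.subset_span ⟨0, rfl⟩
  have hmod : n 0 % 2 = 0 ∧ n 1 % 2 = 0 ∧ n 2 % 2 = 0 ∨
      n 0 % 2 = 1 ∧ n 1 % 2 = 1 ∧ n 2 % 2 = 1 := by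
    have := even_add_of_actS_im him hn
    have := even_add_of_actS_jm hjm hn
    grind
  obtain ⟨h₀, h₁, h₂⟩ | ⟨h₀, h₁, h₂⟩ := hmod <;> rw [Fin.prod_univ_three, h₀, h₁, h₂]
  · simpa using h_one
  · simpa only [pow_one, prod_X, Algebra.smul_def, mul_one] using
      Submodule.smul_mem _ primaryInv.a₂ h_one

theorem actS_tm_of_mem_primaryInv {a : S3} (ha : a ∈ primaryInv) : actS tm a = a := by
  suffices primaryInv ≤ AlgHom.equalizer (actS tm) (AlgHom.id F3 S3) from this ha
  refine Algebra.adjoin_le ?_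
  rintro _ (rfl | rfl | rfl) <;>
    simp only [a1, a2, a3, SetLike.mem_coe, AlgHom.mem_equalizer, AlgHom.id_apply, map_add,
      map_mul, map_pow, actS_tm_X, Fin.isValue, Fin.reduceAdd] <;>
    ring

theorem supportPart_mem_primaryInv (f : S3) :
    supportPart (fun n => n 0 = n 1 ∧ n 1 = n 2) f ∈ primaryInv := by
  rw [(supportPart _ f).as_sum]
  refine sum_mem fun n hn => ?_
  obtain ⟨⟨h₁, h₂⟩, -⟩ := mem_support_supportPart.1 hn
  rw [monomial_eq, Finsupp.prod_fintype _ _ (by simp), Fin.prod_univ_three, ← h₂, ← h₁,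
    ← mul_pow, ← mul_pow]
  exact mul_mem (primaryInv.algebraMap_mem _) (pow_mem primaryInv.a₂.2 _)

end Polynomials

section Forms

theorem yy_mul_self (s : Fin 3) : yy s * yy s = 0 := ExteriorAlgebra.ι_sq_zero _

theorem yy_mul_yy_swap (s r : Fin 3) : yy s * yy r = -(yy r * yy s) :=
  eq_neg_of_add_eq_zero_left (ExteriorAlgebra.ι_add_mul_swap _ _)

theorem yy_mul_yy_mul_yy_rotate (s r q : Fin 3) : yy s * (yy r * yy q) = yy r * (yy q * yy s) := by
  rw [yy_mul_yy_swap q s, ← mul_assoc, yy_mul_yy_swap s r, neg_mul, mul_neg, mul_assoc]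

theorem yy_mul_yy_mul_yy_succ (s : Fin 3) : yy s * (yy (s + 1) * yy (s + 2)) = y123 := by
  fin_cases s
  · exact (mul_assoc _ _ _).symm
  · exact (yy_mul_yy_mul_yy_rotate 0 1 2).symm.trans (mul_assoc _ _ _).symm
  · exact (yy_mul_yy_mul_yy_rotate 2 0 1).trans (mul_assoc _ _ _).symm

theorem map_repL_y123_of_rep_eq_diagonal {g : G3} {ε : Fin 3 → F3} (h : rep g = diagonal ε) :
    ExteriorAlgebra.map (repL g) y123 = (ε 0 * ε 1 * ε 2) • y123 := by
  simp only [y123, map_mul, map_repL_yy_of_rep_eq_diagonal h, smul_mul_smul_comm]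

theorem map_repL_tm_y123 : ExteriorAlgebra.map (repL tm) y123 = y123 := by
  simp only [y123, map_mul, map_repL_tm_yy]
  exact (mul_assoc _ _ _).trans (yy_mul_yy_mul_yy_succ 1)

theorem yy_mul_y123 (s : Fin 3) : yy s * y123 = 0 := by
  rw [← yy_mul_yy_mul_yy_succ s, ← mul_assoc, yy_mul_self, zero_mul]

/-- The monomials in `y₁, y₂, y₃`; the one of degree two with index `s` is `y_{s+1} y_{s+2}`. -/
noncomputable def lamVec : Unit ⊕ Fin 3 ⊕ Fin 3 ⊕ Unit → Lam :=
  Sum.elim (fun _ => 1) (Sum.elim yy (Sum.elim (fun s => yy (s + 1) * yy (s + 2)) fun _ => y123))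

theorem yy_mul_lamVec_mem (r : Fin 3) (i : Unit ⊕ Fin 3 ⊕ Fin 3 ⊕ Unit) :
    yy r * lamVec i ∈ Submodule.span F3 (Set.range lamVec) := by
  have hlam (i) : lamVec i ∈ Submodule.span F3 (Set.range lamVec) := Submodule.subset_span ⟨i, rfl⟩
  have htwo (s : Fin 3) : yy (s + 1) * yy (s + 2) ∈ Submodule.span F3 (Set.range lamVec) :=
    hlam (.inr (.inr (.inl s)))
  have hcases (s : Fin 3) : s = r ∨ s = r + 1 ∨ s = r + 2 := by grind
  have hrot (s t : Fin 3) : yy s * (yy t * yy s) = 0 := by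
    rw [yy_mul_yy_mul_yy_rotate, yy_mul_self, mul_zero]
  obtain _ | s | s | _ := i
  · exact (mul_one (yy r)).symm ▸ hlam (.inr (.inl r))
  · change yy r * yy s ∈ _
    obtain rfl | rfl | rfl := hcases s
    · exact (yy_mul_self s).symm ▸ zero_mem _
    · simpa [add_assoc] using htwo (r + 2)
    · rw [yy_mul_yy_swap]
      simpa [add_assoc] using htwo (r + 1)
  · change yy r * (yy (s + 1) * yy (s + 2)) ∈ _
    obtain rfl | rfl | rfl := hcases s
    · exact (yy_mul_yy_mul_yy_succ s).symm ▸ hlam (.inr (.inr (.inr ())))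
    · simp [add_assoc, hrot]
    · simp [add_assoc, ← mul_assoc, yy_mul_self]
  · exact (yy_mul_y123 r).symm ▸ zero_mem _

theorem span_range_lamVec : Submodule.span F3 (Set.range lamVec) = ⊤ := by
  refine eq_top_iff.2 fun u _ => ?_
  induction u using CliffordAlgebra.left_induction with
  | algebraMap c =>
    rw [Algebra.algebraMap_eq_smul_one]
    exact Submodule.smul_mem _ c (Submodule.subset_span ⟨.inl (), rfl⟩)
  | add u v hu hv => exact add_mem (hu trivial) (hv trivial)
  | ι_mul u m hu =>
    have hm : CliffordAlgebra.ι (0 : QuadraticForm F3 (Fin 3 → F3)) m = ∑ s, m s • yy s := by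
      conv_lhs => rw [pi_eq_sum_univ' m]
      simp only [map_sum, map_smul]
      rfl
    simp only [hm, Finset.sum_mul, smul_mul_assoc]
    refine sum_mem fun s _ => Submodule.smul_mem _ _ ?_
    exact mul_mem_span_of_forall_mul_mem (Set.forall_mem_range.2 (yy_mul_lamVec_mem s)) u
      (hu trivial)

/-- The monomials in `y₁, y₂, y₃` as a basis of `Λ(M*)`. -/
noncomputable def lamBasis : Module.Basis (Unit ⊕ Fin 3 ⊕ Fin 3 ⊕ Unit) F3 Lam :=
  basisOfTopLeSpanOfCardEqFinrank lamVec span_range_lamVec.ge (by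
    rw [Module.finrank_eq_card_basis (Pi.basisFun F3 (Fin 3)).ExteriorAlgebra]
    decide)

/-- The `1`-form with coefficients `f`. -/
noncomputable def oneForm : (Fin 3 → S3) →ₗ[S3] Rf :=
  Fintype.linearCombination S3 fun s => (1 : S3) ⊗ₜ[F3] yy s

/-- The `2`-form whose coefficient at `y_{s+1} y_{s+2}` is `f s`. -/
noncomputable def twoForm : (Fin 3 → S3) →ₗ[S3] Rf :=
  Fintype.linearCombination S3 fun s => (1 : S3) ⊗ₜ[F3] (yy (s + 1) * yy (s + 2))

/-- The form with coefficients `p`, `f`, `g`, `q` in degrees `0`, `1`, `2`, `3`. -/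
noncomputable def form (p : S3) (f g : Fin 3 → S3) (q : S3) : Rf :=
  p ⊗ₜ 1 + oneForm f + twoForm g + q ⊗ₜ y123

theorem oneForm_apply (f : Fin 3 → S3) : oneForm f = ∑ s, f s ⊗ₜ[F3] yy s := by
  simp [oneForm, Fintype.linearCombination_apply, smul_tmul']

theorem twoForm_apply (f : Fin 3 → S3) : twoForm f = ∑ s, f s ⊗ₜ[F3] (yy (s + 1) * yy (s + 2)) := by
  simp [twoForm, Fintype.linearCombination_apply, smul_tmul']

theorem oneForm_vec (f g h : S3) :
    oneForm ![f, g, h] = f ⊗ₜ[F3] yy 0 + g ⊗ₜ[F3] yy 1 + h ⊗ₜ[F3] yy 2 := by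
  simp [oneForm_apply, Fin.sum_univ_three]

theorem twoForm_vec (f g h : S3) : twoForm ![f, g, h] =
    f ⊗ₜ[F3] (yy 1 * yy 2) + g ⊗ₜ[F3] (yy 2 * yy 0) + h ⊗ₜ[F3] (yy 0 * yy 1) := by
  simp [twoForm_apply, Fin.sum_univ_three]

theorem form_eq_equivFun_symm (p : S3) (f g : Fin 3 → S3) (q : S3) :
    form p f g q = (lamBasis.baseChange S3).equivFun.symm
      (Sum.elim (fun _ => p) (Sum.elim f (Sum.elim g fun _ => q))) := by
  simp [form, oneForm_apply, twoForm_apply, lamBasis, lamVec, Module.Basis.equivFun_symm_apply,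
    smul_tmul', add_assoc]

theorem form_inj {p p' q q' : S3} {f f' g g' : Fin 3 → S3} :
    form p f g q = form p' f' g' q' ↔ p = p' ∧ f = f' ∧ g = g' ∧ q = q' := by
  simp only [form_eq_equivFun_symm, EmbeddingLike.apply_eq_iff_eq, Sum.elim_eq_iff]
  simp only [funext_iff, forall_const]

theorem exists_form_eq (z : Rf) : ∃ p f g q, form p f g q = z := by
  obtain ⟨c, rfl⟩ := (lamBasis.baseChange S3).equivFun.symm.surjective z
  refine ⟨c (.inl ()), fun s => c (.inr (.inl s)), fun s => c (.inr (.inr (.inl s))),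
    c (.inr (.inr (.inr ()))), ?_⟩
  rw [form_eq_equivFun_symm]
  congr 1
  ext (_ | _ | _ | _) <;> rfl

theorem oneForm_mul_oneForm (f g : Fin 3 → S3) : oneForm f * oneForm g = twoForm (f ⨯₃ g) := by
  simp only [oneForm_apply, twoForm_apply, cross_apply, Fin.sum_univ_three, add_mul, mul_add,
    Algebra.TensorProduct.tmul_mul_tmul, yy_mul_self, tmul_zero, yy_mul_yy_swap 1 0,
    yy_mul_yy_swap 2 1, yy_mul_yy_swap 0 2, tmul_neg, zero_add, Fin.isValue, Fin.reduceAdd,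
    cons_val]
  simp only [sub_tmul]
  abel

theorem actR_form_of_rep_eq_diagonal {h : G3} {ε : Fin 3 → F3} (hε : rep h = diagonal ε) (p : S3)
    (f g : Fin 3 → S3) (q : S3) : actR h (form p f g q) =
      form (actS h p) (fun s => ε s • actS h (f s))
        (fun s => (ε (s + 1) * ε (s + 2)) • actS h (g s)) ((ε 0 * ε 1 * ε 2) • actS h q) := by
  simp only [form, oneForm_apply, twoForm_apply, map_add, map_sum, actR_tmul, map_one, map_mul,
    map_repL_yy_of_rep_eq_diagonal hε, map_repL_y123_of_rep_eq_diagonal hε, smul_mul_smul_comm,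
    smul_tmul]

theorem actR_tm_form (p : S3) (f g : Fin 3 → S3) (q : S3) : actR tm (form p f g q) =
    form (actS tm p) (fun s => actS tm (f (s - 1))) (fun s => actS tm (g (s - 1))) (actS tm q) := by
  have hone : ∑ s, actS tm (f s) ⊗ₜ[F3] yy (s + 1) = oneForm fun s => actS tm (f (s - 1)) := by
    rw [oneForm_apply]
    exact Fintype.sum_equiv (Equiv.addRight 1) _ _ fun s => by simp
  have htwo : ∑ s, actS tm (g s) ⊗ₜ[F3] (yy (s + 1 + 1) * yy (s + 2 + 1)) =
      twoForm fun s => actS tm (g (s - 1)) := by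
    rw [twoForm_apply]
    exact Fintype.sum_equiv (Equiv.addRight 1) _ _ fun s => by simp [add_assoc]
  simp only [form, oneForm_apply f, twoForm_apply g, map_add, map_sum, actR_tmul, map_one,
    map_mul, map_repL_tm_yy, hone, htwo, map_repL_tm_y123]

theorem d4_eq : d4 = d3 - a1 • d1 - c1 * c2 := by
  simp only [d4, d3, d1, c1, c2, ← oneForm_vec, ← twoForm_vec, oneForm_mul_oneForm, ← map_smul,
    ← map_sub]
  congr 1
  ext1 s
  fin_cases s <;>
    simp only [Pi.sub_apply, Pi.smul_apply, smul_eq_mul, cross_apply, a1,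
      cons_val, Fin.isValue, Fin.zero_eta, Fin.mk_one, Fin.reduceFinMk] <;>
    grind

theorem d5_eq : d5 = a2 • d1 - a1 • d2 + c1 * c3 := by
  simp only [d5, d2, d1, c1, c3, ← oneForm_vec, ← twoForm_vec, oneForm_mul_oneForm, ← map_smul,
    ← map_sub, ← map_add]
  congr 1
  ext1 s
  fin_cases s <;>
    simp only [Pi.add_apply, Pi.sub_apply, Pi.smul_apply, smul_eq_mul, cross_apply, a1, a2,
      cons_val, Fin.isValue, Fin.zero_eta, Fin.mk_one, Fin.reduceFinMk] <;>
    grind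

theorem d6_eq : d6 = a2 • d2 - (a3 + a1 ^ 2) • d1 - a1 • d3 + a1 • d4 - c2 * c3 := by
  simp only [d6, d4, d3, d2, d1, c2, c3, ← oneForm_vec, ← twoForm_vec, oneForm_mul_oneForm,
    ← map_smul, ← map_sub, ← map_add]
  congr 1
  ext1 s
  fin_cases s <;>
    simp only [Pi.add_apply, Pi.sub_apply, Pi.smul_apply, smul_eq_mul, cross_apply, a1, a2, a3,
      cons_val, Fin.isValue, Fin.zero_eta, Fin.mk_one, Fin.reduceFinMk] <;>
    grind

end Forms

section CyclicTrace

/-- The trace of the cyclic group generated by `t`. -/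
noncomputable def cyclicTrace : Rf →ₗ[F3] Rf :=
  LinearMap.id + (actR tm).toLinearMap + (actR tm).toLinearMap ∘ₗ (actR tm).toLinearMap

theorem cyclicTrace_apply (z : Rf) : cyclicTrace z = z + actR tm z + actR tm (actR tm z) := rfl

theorem actR_tm_cyclicTrace (z : Rf) : actR tm (cyclicTrace z) = cyclicTrace z := by
  have hz : actR tm (actR tm (actR tm z)) = z := by
    rw [← actR_mul_apply, ← actR_mul_apply, ← pow_three', tm_pow_three, actR_one, AlgHom.id_apply]
  rw [cyclicTrace_apply, map_add, map_add, hz, add_comm, ← add_assoc]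

theorem cyclicTrace_mem_RG {z : Rf} (him : actR im z = z) (hjm : actR jm z = z) :
    cyclicTrace z ∈ RG := by
  have hi (w : Rf) : actR im (actR tm w) = actR tm (actR jm w) := by
    rw [← actR_mul_apply, im_mul_tm, actR_mul_apply]
  have hj (w : Rf) : actR jm (actR tm w) = actR tm (actR im (actR jm w)) := by
    rw [← actR_mul_apply, jm_mul_tm, actR_mul_apply, actR_mul_apply]
  refine mem_RG_iff.2 ⟨?_, ?_, actR_tm_cyclicTrace z⟩ <;>
    simp only [cyclicTrace_apply, map_add, him, hjm, hi, hj]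

theorem cyclicTrace_mul_of_actR_tm {x : Rf} (hx : actR tm x = x) (z : Rf) :
    cyclicTrace (x * z) = x * cyclicTrace z := by
  simp only [cyclicTrace_apply, map_mul, hx, mul_add]

theorem cyclicTrace_tmul_one (f : S3) :
    cyclicTrace (f ⊗ₜ 1) = (f + actS tm f + actS tm (actS tm f)) ⊗ₜ 1 := by
  simp only [cyclicTrace_apply, actR_tmul, map_one, add_tmul]

theorem cyclicTrace_tmul_yy_zero (f : S3) :
    cyclicTrace (f ⊗ₜ yy 0) = oneForm ![f, actS tm f, actS tm (actS tm f)] := by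
  simp [cyclicTrace_apply, actR_tmul, map_repL_tm_yy, oneForm_apply, Fin.sum_univ_three]

theorem cyclicTrace_tmul_yy_one_mul_yy_two (f : S3) :
    cyclicTrace (f ⊗ₜ (yy 1 * yy 2)) = twoForm ![f, actS tm f, actS tm (actS tm f)] := by
  simp [cyclicTrace_apply, actR_tmul, map_repL_tm_yy, twoForm_apply, Fin.sum_univ_three]

theorem cyclicTrace_relGen_tmul_yy_zero (i : Fin 6) :
    cyclicTrace (relGen i ⊗ₜ yy 0) = ![c1, c2, c3, c4, c5, c6] i := by
  fin_cases i <;>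
    simp [cyclicTrace_tmul_yy_zero, oneForm_apply, Fin.sum_univ_three, relGen, actS_tm_X, c1, c2,
      c3, c4, c5, c6]

theorem cyclicTrace_relGen_tmul_yy_one_mul_yy_two (i : Fin 6) :
    cyclicTrace (relGen i ⊗ₜ (yy 1 * yy 2)) = ![d1, d2, d3, d4, d5, d6] i := by
  fin_cases i <;>
    simp [cyclicTrace_tmul_yy_one_mul_yy_two, twoForm_apply, Fin.sum_univ_three, relGen, actS_tm_X,
      d1, d2, d3, d4, d5, d6]

theorem cyclicTrace_invGen_tmul_one (i : Fin 6) :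
    cyclicTrace (invGen i ⊗ₜ 1) = ![0, a1, a3, a1, a3 - a1 ^ 2, bP] i ⊗ₜ 1 := by
  rw [cyclicTrace_tmul_one]
  congr 1
  fin_cases i <;>
    simp only [invGen, map_mul, map_pow, map_one, actS_tm_X, a1, a3, bP, cons_val, Fin.isValue,
      Fin.zero_eta, Fin.mk_one, Fin.reduceFinMk, Fin.reduceAdd] <;>
    grind

theorem cyclicTrace_tmul_one_mem_RG {f : S3} (him : actS im f = f) (hjm : actS jm f = f) :
    cyclicTrace (f ⊗ₜ 1) ∈ RG :=
  cyclicTrace_mem_RG (by rw [actR_tmul, him, map_one]) (by rw [actR_tmul, hjm, map_one])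

theorem cyclicTrace_tmul_yy_zero_mem_RG {f : S3} (him : actS im f = f) (hjm : actS jm f = -f) :
    cyclicTrace (f ⊗ₜ yy 0) ∈ RG :=
  cyclicTrace_mem_RG
    (by simp [actR_tmul, him, map_repL_yy_of_rep_eq_diagonal rep_im])
    (by simp [actR_tmul, hjm, map_repL_yy_of_rep_eq_diagonal rep_jm, tmul_neg, neg_tmul])

theorem cyclicTrace_tmul_yy_one_mul_yy_two_mem_RG {f : S3} (him : actS im f = f)
    (hjm : actS jm f = -f) : cyclicTrace (f ⊗ₜ (yy 1 * yy 2)) ∈ RG :=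
  cyclicTrace_mem_RG
    (by simp [actR_tmul, him, map_repL_yy_of_rep_eq_diagonal rep_im])
    (by simp [actR_tmul, hjm, map_repL_yy_of_rep_eq_diagonal rep_jm, tmul_neg, neg_tmul])

theorem actS_im_relGen (i : Fin 6) : actS im (relGen i) = relGen i := by
  fin_cases i <;>
    simp only [relGen, actS_eq_aeval_smul_X rep_im, map_mul, map_pow, aeval_X, neg_smul,
      one_smul, cons_val, Fin.isValue, Fin.zero_eta, Fin.mk_one, Fin.reduceFinMk] <;>
    ring

theorem actS_jm_relGen (i : Fin 6) : actS jm (relGen i) = -relGen i := by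
  fin_cases i <;>
    simp only [relGen, actS_eq_aeval_smul_X rep_jm, map_mul, map_pow, aeval_X, neg_smul,
      one_smul, cons_val, Fin.isValue, Fin.zero_eta, Fin.mk_one, Fin.reduceFinMk] <;>
    ring

theorem actS_im_invGen (i : Fin 6) : actS im (invGen i) = invGen i := by
  fin_cases i <;>
    simp only [invGen, actS_eq_aeval_smul_X rep_im, map_mul, map_pow, map_one, aeval_X, neg_smul,
      one_smul, cons_val, Fin.isValue, Fin.zero_eta, Fin.mk_one, Fin.reduceFinMk] <;>
    ring

theorem actS_jm_invGen (i : Fin 6) : actS jm (invGen i) = invGen i := by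
  fin_cases i <;>
    simp only [invGen, actS_eq_aeval_smul_X rep_jm, map_mul, map_pow, map_one, aeval_X, neg_smul,
      one_smul, cons_val, Fin.isValue, Fin.zero_eta, Fin.mk_one, Fin.reduceFinMk] <;>
    ring

theorem a2_tmul_one_mem_RG : a2 ⊗ₜ 1 ∈ RG := by
  refine mem_RG_iff.2 ⟨?_, ?_, ?_⟩ <;> rw [actR_tmul, map_one]
  · simp [a2, actS_eq_aeval_smul_X rep_im]
  · simp [a2, actS_eq_aeval_smul_X rep_jm]
  · rw [actS_tm_of_mem_primaryInv (show a2 ∈ primaryInv from primaryInv.a₂.2)]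

theorem one_tmul_y123_mem_RG : 1 ⊗ₜ y123 ∈ RG := by
  refine mem_RG_iff.2 ⟨?_, ?_, ?_⟩ <;> rw [actR_tmul, map_one]
  · simp [map_repL_y123_of_rep_eq_diagonal rep_im]
  · simp [map_repL_y123_of_rep_eq_diagonal rep_jm]
  · rw [map_repL_tm_y123]

theorem gens_mem_RG (i : Fin 14) : gens i ∈ RG := by
  have ha (j : Fin 6) := cyclicTrace_invGen_tmul_one j ▸
    cyclicTrace_tmul_one_mem_RG (actS_im_invGen j) (actS_jm_invGen j)
  have hc (j : Fin 6) := cyclicTrace_relGen_tmul_yy_zero j ▸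
    cyclicTrace_tmul_yy_zero_mem_RG (actS_im_relGen j) (actS_jm_relGen j)
  have hd (j : Fin 6) := cyclicTrace_relGen_tmul_yy_one_mul_yy_two j ▸
    cyclicTrace_tmul_yy_one_mul_yy_two_mem_RG (actS_im_relGen j) (actS_jm_relGen j)
  fin_cases i
  exacts [ha 1, a2_tmul_one_mem_RG, ha 2, ha 5, hc 0, hc 1, hc 2, hc 3, hc 4, hc 5, hd 0, hd 1,
    hd 2, one_tmul_y123_mem_RG]

end CyclicTrace

section Generation

/-- The subalgebra of `R` generated by the fourteen elements `gens`. -/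
noncomputable def genAlgebra : Subalgebra F3 Rf := Algebra.adjoin F3 (Set.range gens)

theorem gens_mem_genAlgebra (i : Fin 14) : gens i ∈ genAlgebra := Algebra.subset_adjoin ⟨i, rfl⟩

theorem tmul_one_mem_genAlgebra_of_mem_primaryInv {a : S3} (ha : a ∈ primaryInv) :
    a ⊗ₜ 1 ∈ genAlgebra := by
  suffices primaryInv ≤ genAlgebra.comap Algebra.TensorProduct.includeLeft from this ha
  refine Algebra.adjoin_le ?_
  rintro _ (rfl | rfl | rfl)
  exacts [gens_mem_genAlgebra 0, gens_mem_genAlgebra 1, gens_mem_genAlgebra 2]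

theorem smul_mem_genAlgebra {a : S3} (ha : a ∈ primaryInv) {z : Rf} (hz : z ∈ genAlgebra) :
    a • z ∈ genAlgebra := by
  rw [← smul_one_mul, Algebra.TensorProduct.one_def, smul_tmul', smul_eq_mul, mul_one]
  exact mul_mem (tmul_one_mem_genAlgebra_of_mem_primaryInv ha) hz

theorem cyclicTrace_tmul_mem_genAlgebra {ι : Type*} {u : ι → S3} {w : Lam}
    (hu : ∀ i, cyclicTrace (u i ⊗ₜ w) ∈ genAlgebra) {f : S3}
    (hf : f ∈ Submodule.span primaryInv (Set.range u)) : cyclicTrace (f ⊗ₜ w) ∈ genAlgebra := by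
  induction hf using Submodule.span_induction with
  | mem f hf => obtain ⟨i, rfl⟩ := hf; exact hu i
  | zero => simp
  | add f g _ _ hf hg => rw [add_tmul, map_add]; exact add_mem hf hg
  | smul a f _ hf =>
    have ha : actR tm ((a : S3) ⊗ₜ 1) = (a : S3) ⊗ₜ 1 := by
      rw [actR_tmul, actS_tm_of_mem_primaryInv a.2, map_one]
    have hsmul : (a • f) ⊗ₜ[F3] w = ((a : S3) ⊗ₜ 1) * (f ⊗ₜ w) := by
      rw [Algebra.TensorProduct.tmul_mul_tmul, one_mul, Subalgebra.smul_def, smul_eq_mul]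
    rw [hsmul, cyclicTrace_mul_of_actR_tm ha]
    exact mul_mem (tmul_one_mem_genAlgebra_of_mem_primaryInv a.2) hf

theorem cyclicTrace_relGen_tmul_yy_zero_mem_genAlgebra (i : Fin 6) :
    cyclicTrace (relGen i ⊗ₜ yy 0) ∈ genAlgebra := by
  rw [cyclicTrace_relGen_tmul_yy_zero]
  fin_cases i
  exacts [gens_mem_genAlgebra 4, gens_mem_genAlgebra 5, gens_mem_genAlgebra 6,
    gens_mem_genAlgebra 7, gens_mem_genAlgebra 8, gens_mem_genAlgebra 9]

theorem cyclicTrace_relGen_tmul_yy_one_mul_yy_two_mem_genAlgebra (i : Fin 6) :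
    cyclicTrace (relGen i ⊗ₜ (yy 1 * yy 2)) ∈ genAlgebra := by
  have ha₁ : a1 ∈ primaryInv := primaryInv.a₁.2
  have ha₂ : a2 ∈ primaryInv := primaryInv.a₂.2
  have ha₃ : a3 ∈ primaryInv := primaryInv.a₃.2
  have hc₁ : c1 ∈ genAlgebra := gens_mem_genAlgebra 4
  have hc₂ : c2 ∈ genAlgebra := gens_mem_genAlgebra 5
  have hc₃ : c3 ∈ genAlgebra := gens_mem_genAlgebra 6
  have hd₁ : d1 ∈ genAlgebra := gens_mem_genAlgebra 10
  have hd₂ : d2 ∈ genAlgebra := gens_mem_genAlgebra 11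
  have hd₃ : d3 ∈ genAlgebra := gens_mem_genAlgebra 12
  have hd₄ : d4 ∈ genAlgebra :=
    d4_eq ▸ sub_mem (sub_mem hd₃ (smul_mem_genAlgebra ha₁ hd₁)) (mul_mem hc₁ hc₂)
  have hd₅ : d5 ∈ genAlgebra :=
    d5_eq ▸ add_mem (sub_mem (smul_mem_genAlgebra ha₂ hd₁) (smul_mem_genAlgebra ha₁ hd₂))
      (mul_mem hc₁ hc₃)
  have hd₆ : d6 ∈ genAlgebra :=
    d6_eq ▸ sub_mem (add_mem (sub_mem (sub_mem (smul_mem_genAlgebra ha₂ hd₂)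
      (smul_mem_genAlgebra (add_mem ha₃ (pow_mem ha₁ 2)) hd₁)) (smul_mem_genAlgebra ha₁ hd₃))
      (smul_mem_genAlgebra ha₁ hd₄)) (mul_mem hc₂ hc₃)
  rw [cyclicTrace_relGen_tmul_yy_one_mul_yy_two]
  fin_cases i
  exacts [hd₁, hd₂, hd₃, hd₄, hd₅, hd₆]

theorem eq_vec_of_actS_tm {f : Fin 3 → S3} (htm : ∀ s, actS tm (f (s - 1)) = f s) :
    f = ![f 0, actS tm (f 0), actS tm (actS tm (f 0))] := by
  have h₁ : actS tm (f 0) = f 1 := htm 1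
  have h₂ : actS tm (f 1) = f 2 := htm 2
  rw [h₁, h₂]
  ext1 s
  fin_cases s <;> rfl

theorem oneForm_mem_genAlgebra {f : Fin 3 → S3} (him : actS im (f 0) = f 0)
    (hjm : actS jm (f 0) = -f 0) (htm : ∀ s, actS tm (f (s - 1)) = f s) :
    oneForm f ∈ genAlgebra := by
  rw [eq_vec_of_actS_tm htm, ← cyclicTrace_tmul_yy_zero]
  exact cyclicTrace_tmul_mem_genAlgebra cyclicTrace_relGen_tmul_yy_zero_mem_genAlgebra
    (mem_span_relGen him hjm)

theorem twoForm_mem_genAlgebra {f : Fin 3 → S3} (him : actS im (f 0) = f 0)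
    (hjm : actS jm (f 0) = -f 0) (htm : ∀ s, actS tm (f (s - 1)) = f s) :
    twoForm f ∈ genAlgebra := by
  rw [eq_vec_of_actS_tm htm, ← cyclicTrace_tmul_yy_one_mul_yy_two]
  exact cyclicTrace_tmul_mem_genAlgebra
    cyclicTrace_relGen_tmul_yy_one_mul_yy_two_mem_genAlgebra (mem_span_relGen him hjm)

theorem cyclicTrace_tmul_one_mem_genAlgebra {f : S3} (him : actS im f = f) (hjm : actS jm f = f) :
    cyclicTrace (f ⊗ₜ 1) ∈ genAlgebra := by
  refine cyclicTrace_tmul_mem_genAlgebra (fun i => ?_) (mem_span_invGen him hjm)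
  rw [cyclicTrace_invGen_tmul_one]
  have ha (a : primaryInv) := tmul_one_mem_genAlgebra_of_mem_primaryInv a.2
  fin_cases i
  exacts [ha 0, ha primaryInv.a₁, ha primaryInv.a₃, ha primaryInv.a₁,
    ha (primaryInv.a₃ - primaryInv.a₁ ^ 2), gens_mem_genAlgebra 3]

theorem tmul_one_mem_genAlgebra {p : S3} (him : actS im p = p) (hjm : actS jm p = p)
    (htm : actS tm p = p) : p ⊗ₜ 1 ∈ genAlgebra := by
  rw [eq_supportPart_add_sum_rename (f := p) (by rwa [← actS_tm_eq_rename]), add_tmul,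
    ← actS_tm_eq_rename, ← cyclicTrace_tmul_one]
  exact add_mem (tmul_one_mem_genAlgebra_of_mem_primaryInv (supportPart_mem_primaryInv p))
    (cyclicTrace_tmul_one_mem_genAlgebra (by rw [actS_supportPart rep_im, him])
      (by rw [actS_supportPart rep_jm, hjm]))

theorem form_mem_genAlgebra {p q : S3} {f g : Fin 3 → S3} (h : form p f g q ∈ RG) :
    form p f g q ∈ genAlgebra := by
  obtain ⟨him, hjm, htm⟩ := mem_RG_iff.1 h
  rw [actR_form_of_rep_eq_diagonal rep_im, form_inj] at him
  rw [actR_form_of_rep_eq_diagonal rep_jm, form_inj] at hjm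
  rw [actR_tm_form, form_inj] at htm
  obtain ⟨hip, hif, hig, hiq⟩ := him
  obtain ⟨hjp, hjf, hjg, hjq⟩ := hjm
  obtain ⟨htp, htf, htg, htq⟩ := htm
  have hp : p ⊗ₜ 1 ∈ genAlgebra := tmul_one_mem_genAlgebra hip hjp htp
  have hq : q ⊗ₜ 1 ∈ genAlgebra :=
    tmul_one_mem_genAlgebra (by simpa using hiq) (by simpa using hjq) htq
  have hf : oneForm f ∈ genAlgebra :=
    oneForm_mem_genAlgebra (by simpa using congrFun hif 0)
      (by simpa [neg_eq_iff_eq_neg] using congrFun hjf 0) (congrFun htf)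
  have hg : twoForm g ∈ genAlgebra :=
    twoForm_mem_genAlgebra (by simpa using congrFun hig 0)
      (by simpa [neg_eq_iff_eq_neg] using congrFun hjg 0) (congrFun htg)
  have hy : (1 : S3) ⊗ₜ y123 ∈ genAlgebra := gens_mem_genAlgebra 13
  have hqy : q ⊗ₜ y123 ∈ genAlgebra := by
    simpa only [Algebra.TensorProduct.tmul_mul_tmul, mul_one, one_mul] using mul_mem hq hy
  exact add_mem (add_mem (add_mem hp hf) hg) hqy

end Generation

/-- `R^G` equals the `𝔽₃`-subalgebra of `R` generated by
`{a₁, a₂, a₃, b, c₁, c₂, c₃, c₄, c₅, c₆, d₁, d₂, d₃, y₁y₂y₃}`. -/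
theorem stmt14 : Algebra.adjoin F3 (Set.range gens) = RG := by
  refine le_antisymm (Algebra.adjoin_le ?_) fun z hz => ?_
  · rintro _ ⟨i, rfl⟩
    exact gens_mem_RG i
  · obtain ⟨p, f, g, q, rfl⟩ := exists_form_eq z
    exact form_mem_genAlgebra hz
end
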